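/- arXiv:1607.07667 — 4 statements merged into one kernel-verified Lean document; each statement's English description precedes it below -/
import Mathlib

section
/- Let A_g (g ≥ 2, n ≥ 2) be the quotient of H*(Σ_g^{×n}; ℚ) by the ideal generated by all products x_i(p)x_j(q), x_i(p)y_j(q), y_i(p)y_j(q) with p, q ∈ {2,…,g} and i ≠ j. Then an additive (ℚ-vector space) basis of A_g is given by the images of the monomials u_1⋯u_n such that (i) each u_i ∈ {1, a_i(p), b_i(p), ω_i : 1 ≤ p ≤ g}, and (ii) at most one of u_1,…,u_n belongs to {a_i(p), b_i(p), ω_i : 2 ≤ p ≤ g}. -/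
/-- Generators of the rational cohomology of the `n`-fold power of a genus-`g` surface:
`a i p`, `b i p` in degree 1 and `w i` (the class `ω_i`) in degree 2.  The indices are
`0`-based: `a i p` stands for the class `a_{i+1}(p+1)` of the paper. -/
inductive SurfGen (n g : ℕ) : Type
  | a (i : Fin n) (p : Fin g)
  | b (i : Fin n) (p : Fin g)
  | w (i : Fin n)

/-- The cohomological degree of a generator. -/
def SurfGen.deg {n g : ℕ} : SurfGen n g → ℕ
  | .a _ _ => 1
  | .b _ _ => 1
  | .w _ => 2

open FreeAlgebra in
/-- The defining relations of `H^*(Σ_g^{×n}; ℚ)`: within each factor,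
`a_i(p)a_i(q) = b_i(p)b_i(q) = 0`, `a_i(p)b_i(q) = δ_{pq} ω_i`, together with
graded (Koszul-signed) commutativity of the generators. -/
inductive SurfRel (n g : ℕ) :
    FreeAlgebra ℚ (SurfGen n g) → FreeAlgebra ℚ (SurfGen n g) → Prop
  | aa (i : Fin n) (p q : Fin g) :
      SurfRel n g (ι ℚ (SurfGen.a i p) * ι ℚ (SurfGen.a i q)) 0
  | bb (i : Fin n) (p q : Fin g) :
      SurfRel n g (ι ℚ (SurfGen.b i p) * ι ℚ (SurfGen.b i q)) 0
  | ab_eq (i : Fin n) (p : Fin g) :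
      SurfRel n g (ι ℚ (SurfGen.a i p) * ι ℚ (SurfGen.b i p)) (ι ℚ (SurfGen.w i))
  | ab_ne (i : Fin n) (p q : Fin g) : p ≠ q →
      SurfRel n g (ι ℚ (SurfGen.a i p) * ι ℚ (SurfGen.b i q)) 0
  | koszul (u v : SurfGen n g) :
      SurfRel n g (ι ℚ u * ι ℚ v)
        (((-1 : ℚ) ^ (u.deg * v.deg)) • (ι ℚ v * ι ℚ u))

/-- `H^*(Σ_g^{×n}; ℚ)`, presented by generators and relations. -/
def SurfCoh (n g : ℕ) : Type := RingQuot (SurfRel n g)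

noncomputable instance (n g : ℕ) : Ring (SurfCoh n g) :=
  inferInstanceAs (Ring (RingQuot (SurfRel n g)))

noncomputable instance (n g : ℕ) : Algebra ℚ (SurfCoh n g) :=
  inferInstanceAs (Algebra ℚ (RingQuot (SurfRel n g)))

/-- The class `a_{i+1}(p+1)`. -/
noncomputable def gA {n g : ℕ} (i : Fin n) (p : Fin g) : SurfCoh n g :=
  RingQuot.mkAlgHom ℚ (SurfRel n g) (FreeAlgebra.ι ℚ (SurfGen.a i p))

/-- The class `b_{i+1}(p+1)`. -/
noncomputable def gB {n g : ℕ} (i : Fin n) (p : Fin g) : SurfCoh n g :=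
  RingQuot.mkAlgHom ℚ (SurfRel n g) (FreeAlgebra.ι ℚ (SurfGen.b i p))

/-- The class `ω_{i+1}`. -/
noncomputable def gW {n g : ℕ} (i : Fin n) : SurfCoh n g :=
  RingQuot.mkAlgHom ℚ (SurfRel n g) (FreeAlgebra.ι ℚ (SurfGen.w i))

/-- The class `x_{i+1}(p+1)`: equal to `a_{i+1}(p+1)` unless `p+1 = 1` and `i+1 ≥ 2`, in which
case it is `a_{i+1}(1) - a_1(1)`. -/
noncomputable def gX {n g : ℕ} [NeZero n] [NeZero g] (i : Fin n) (p : Fin g) : SurfCoh n g :=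
  if p = 0 ∧ i ≠ 0 then gA i p - gA 0 p else gA i p

/-- The class `y_{i+1}(p+1)`: equal to `b_{i+1}(p+1)` unless `p+1 = 1` and `i+1 ≥ 2`, in which
case it is `b_{i+1}(1) - b_1(1)`. -/
noncomputable def gY {n g : ℕ} [NeZero n] [NeZero g] (i : Fin n) (p : Fin g) : SurfCoh n g :=
  if p = 0 ∧ i ≠ 0 then gB i p - gB 0 p else gB i p

/-- The relations defining the quotient algebra `A_g`: all products
`x_i(p)x_j(q)`, `x_i(p)y_j(q)`, `y_i(p)y_j(q)` with `p, q ≥ 2` and `i ≠ j` are set to zero. -/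
inductive ARel (n g : ℕ) [NeZero n] [NeZero g] : SurfCoh n g → SurfCoh n g → Prop
  | xx (i j : Fin n) (p q : Fin g) : i ≠ j → p ≠ 0 → q ≠ 0 → ARel n g (gX i p * gX j q) 0
  | xy (i j : Fin n) (p q : Fin g) : i ≠ j → p ≠ 0 → q ≠ 0 → ARel n g (gX i p * gY j q) 0
  | yy (i j : Fin n) (p q : Fin g) : i ≠ j → p ≠ 0 → q ≠ 0 → ARel n g (gY i p * gY j q) 0

/-- The algebra `A_g`: the quotient of `H^*(Σ_g^{×n}; ℚ)` by the ideal generated by the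
products `x_i(p)x_j(q)`, `x_i(p)y_j(q)`, `y_i(p)y_j(q)` with `p, q ≥ 2`, `i ≠ j`. -/
def SurfA (n g : ℕ) [NeZero n] [NeZero g] : Type := RingQuot (ARel n g)

noncomputable instance (n g : ℕ) [NeZero n] [NeZero g] : Ring (SurfA n g) :=
  inferInstanceAs (Ring (RingQuot (ARel n g)))

noncomputable instance (n g : ℕ) [NeZero n] [NeZero g] : Algebra ℚ (SurfA n g) :=
  inferInstanceAs (Algebra ℚ (RingQuot (ARel n g)))

/-- The quotient map `H^*(Σ_g^{×n}; ℚ) → A_g`. -/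
noncomputable def toA (n g : ℕ) [NeZero n] [NeZero g] : SurfCoh n g →ₐ[ℚ] SurfA n g :=
  RingQuot.mkAlgHom ℚ (ARel n g)

/-- The image of `x_{i+1} = x_{i+1}(1)` in `A_g`. -/
noncomputable def xA {n g : ℕ} [NeZero n] [NeZero g] (i : Fin n) : SurfA n g :=
  toA n g (gX i 0)

/-- The image of `y_{i+1} = y_{i+1}(1)` in `A_g`. -/
noncomputable def yA {n g : ℕ} [NeZero n] [NeZero g] (i : Fin n) : SurfA n g :=
  toA n g (gY i 0)

/-- The image of `ω_{i+1}` in `A_g`. -/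
noncomputable def wA {n g : ℕ} [NeZero n] [NeZero g] (i : Fin n) : SurfA n g :=
  toA n g (gW i)

/-- The possible letters occurring in the `i`-th slot of a basis monomial:
`1`, `a_i(p)` (resp. `x_i(p)`), `b_i(p)` (resp. `y_i(p)`), or `ω_i`. -/
inductive Letter (g : ℕ) : Type
  | one : Letter g
  | la (p : Fin g) : Letter g
  | lb (p : Fin g) : Letter g
  | lw : Letter g

/-- A letter is *exceptional* if it lies in `{a_i(p), b_i(p), ω_i : 2 ≤ p ≤ g}`
(resp. `{x_i(p), y_i(p), ω_i : 2 ≤ p ≤ g}`). -/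
def Letter.isExc {g : ℕ} [NeZero g] : Letter g → Prop
  | .one => False
  | .la p => p ≠ 0
  | .lb p => p ≠ 0
  | .lw => True

/-- Evaluation of a letter in the `i`-th slot using the generators `a, b, ω`. -/
noncomputable def Letter.evalAB {n g : ℕ} (i : Fin n) : Letter g → SurfCoh n g
  | .one => 1
  | .la p => gA i p
  | .lb p => gB i p
  | .lw => gW i

/-- Evaluation of a letter in the `i`-th slot using the classes `x, y, ω`. -/
noncomputable def Letter.evalXY {n g : ℕ} [NeZero n] [NeZero g] (i : Fin n) :
    Letter g → SurfCoh n g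
  | .one => 1
  | .la p => gX i p
  | .lb p => gY i p
  | .lw => gW i

/-- The monomial `u_1 ⋯ u_n` in `H^*(Σ_g^{×n}; ℚ)` associated to a choice of letters, using the
generators `a, b, ω`. -/
noncomputable def monAB {n g : ℕ} (v : Fin n → Letter g) : SurfCoh n g :=
  (List.ofFn fun i : Fin n => (v i).evalAB i).prod

/-- The monomial `v_1 ⋯ v_n` in `H^*(Σ_g^{×n}; ℚ)` associated to a choice of letters, using the
classes `x, y, ω`. -/
noncomputable def monXY {n g : ℕ} [NeZero n] [NeZero g] (v : Fin n → Letter g) : SurfCoh n g :=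
  (List.ofFn fun i : Fin n => (v i).evalXY i).prod

/-- The proposed basis `β₂` of `A_g`, indexed by monomials `u_1 ⋯ u_n` with each
`u_i ∈ {1, a_i(p), b_i(p), ω_i}` such that at most one `u_i` lies in
`{a_i(p), b_i(p), ω_i : 2 ≤ p ≤ g}`, mapped to their images in `A_g`. -/
noncomputable def basisFunAB (n g : ℕ) [NeZero n] [NeZero g]
    (v : {v : Fin n → Letter g // {i : Fin n | (v i).isExc}.Subsingleton}) : SurfA n g :=
  toA n g (monAB v.1)

namespace SurfProof

open Classical

variable {n g : ℕ}

lemma monAB_eq (v : Fin n → Letter g) :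
    monAB v = ((List.finRange n).map fun k => (v k).evalAB k).prod := by
  unfold monAB; rw [List.ofFn_eq_map]

/-- degree of a letter -/
def ldeg : Letter g → ℕ
  | .one => 0
  | .la _ => 1
  | .lb _ => 1
  | .lw => 2

/-- structure coefficient -/
noncomputable def cf : Letter g → Letter g → ℚ
  | .one, _ => 1
  | .la _, .one => 1
  | .lb _, .one => 1
  | .lw, .one => 1
  | .la p, .lb q => if p = q then 1 else 0
  | .lb p, .la q => if p = q then -1 else 0
  | .la _, .la _ => 0
  | .lb _, .lb _ => 0
  | .la _, .lw => 0
  | .lb _, .lw => 0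
  | .lw, .la _ => 0
  | .lw, .lb _ => 0
  | .lw, .lw => 0

/-- result letter -/
def rs : Letter g → Letter g → Letter g
  | .one, l => l
  | .la p, .one => .la p
  | .lb p, .one => .lb p
  | .lw, .one => .lw
  | .la _, .la _ => .lw
  | .la _, .lb _ => .lw
  | .la _, .lw => .lw
  | .lb _, .la _ => .lw
  | .lb _, .lb _ => .lw
  | .lb _, .lw => .lw
  | .lw, .la _ => .lw
  | .lw, .lb _ => .lw
  | .lw, .lw => .lw

def kz (u l : Letter g) : ℚ := (-1) ^ (ldeg u * ldeg l)

lemma kz_sq (u l : Letter g) : kz u l * kz u l = 1 := by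
  unfold kz
  rw [← mul_pow]; simp

lemma kz_comm (u l : Letter g) : kz u l = kz l u := by
  unfold kz; rw [mul_comm]

lemma kz_ne (u l : Letter g) : kz u l ≠ 0 := by
  intro h; have := kz_sq u l; simp [h] at this

lemma kz_one (u : Letter g) : kz u .one = 1 := by simp [kz, ldeg]

lemma cf_one (u : Letter g) : cf u .one = 1 := by cases u <;> rfl
lemma rs_one (u : Letter g) : rs u .one = u := by cases u <;> rfl

lemma ldeg_rs (u l : Letter g) (h : cf u l ≠ 0) : ldeg (rs u l) = ldeg u + ldeg l := by
  cases u <;> cases l <;> simp_all [cf, rs, ldeg]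

lemma kz_rs (u' u l : Letter g) (h : cf u l ≠ 0) :
    kz u' (rs u l) = kz u' u * kz u' l := by
  unfold kz; rw [ldeg_rs u l h, mul_add, pow_add]

lemma rs_comm (u u' l : Letter g) : rs u (rs u' l) = rs u' (rs u l) := by
  cases u <;> cases u' <;> cases l <;> rfl

lemma cf_comm (u u' l : Letter g) :
    cf u' l * cf u (rs u' l) = kz u u' * (cf u l * cf u' (rs u l)) := by
  cases u <;> cases u' <;> cases l <;> simp [cf, rs, kz, ldeg, eq_comm]

lemma rs_exc [NeZero g] (u l : Letter g) (h : l.isExc) : (rs u l).isExc := by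
  cases u <;> cases l <;> simp_all [rs, Letter.isExc]

lemma rs_exc_left [NeZero g] (u l : Letter g) (h : u.isExc) : (rs u l).isExc := by
  cases u <;> cases l <;> simp_all [rs, Letter.isExc]

/-- sign -/
noncomputable def sg (i : Fin n) (u : Letter g) (v : Fin n → Letter g) : ℚ :=
  ∏ k ∈ Finset.univ.filter (· < i), kz u (v k)

lemma sg_update_ge (i j : Fin n) (h : i ≤ j) (u l : Letter g) (v : Fin n → Letter g) :
    sg i u (Function.update v j l) = sg i u v := by
  unfold sg
  refine Finset.prod_congr rfl fun k hk => ?_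
  have : k < i := by simpa using hk
  rw [Function.update_of_ne]
  exact (lt_of_lt_of_le this h).ne

lemma sg_update_lt (i j : Fin n) (h : j < i) (u u' : Letter g) (v : Fin n → Letter g)
    (hc : cf u' (v j) ≠ 0) :
    sg i u (Function.update v j (rs u' (v j))) = kz u u' * sg i u v := by
  unfold sg
  have hm : j ∈ Finset.univ.filter (· < i) := by simpa using h
  rw [← Finset.mul_prod_erase _ _ hm, ← Finset.mul_prod_erase _ _ hm, ← mul_assoc]
  congr 1
  · simp [kz_rs _ _ _ hc]
  · refine Finset.prod_congr rfl fun k hk => ?_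
    rw [Function.update_of_ne (Finset.ne_of_mem_erase hk)]

lemma sg_sq (i : Fin n) (u : Letter g) (v : Fin n → Letter g) : sg i u v * sg i u v = 1 := by
  unfold sg
  rw [← Finset.prod_mul_distrib]
  exact Finset.prod_eq_one fun k _ => kz_sq _ _

section
variable [NeZero g]

/-- at most one exceptional letter -/
def Good (v : Fin n → Letter g) : Prop := {i : Fin n | (v i).isExc}.Subsingleton

noncomputable def gd (v : Fin n → Letter g) : ℚ := if Good v then 1 else 0

/-- updated vector -/
noncomputable def up (i : Fin n) (u : Letter g) (v : Fin n → Letter g) : Fin n → Letter g :=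
  Function.update v i (rs u (v i))

lemma good_of_up (i : Fin n) (u : Letter g) (v : Fin n → Letter g) (h : Good (up i u v)) :
    Good v := by
  have key : ∀ k, (v k).isExc → (up i u v k).isExc := by
    intro k hk
    by_cases hki : k = i
    · subst hki; simpa [up] using rs_exc u _ hk
    · simpa [up, Function.update_of_ne hki] using hk
  intro a ha b hb
  exact h (key a ha) (key b hb)

lemma gd_mul (i : Fin n) (u : Letter g) (v : Fin n → Letter g) :
    gd v * gd (up i u v) = gd (up i u v) := by
  unfold gd
  by_cases h : Good (up i u v)
  · simp [h, good_of_up i u v h]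
  · simp [h]

abbrev V (n g : ℕ) := (Fin n → Letter g) →₀ ℚ

noncomputable def T (i : Fin n) (u : Letter g) : Module.End ℚ (V n g) :=
  Finsupp.linearCombination ℚ fun v =>
    (sg i u v * cf u (v i) * gd (up i u v)) • (Finsupp.single (up i u v) (1 : ℚ))

lemma T_single (i : Fin n) (u : Letter g) (v : Fin n → Letter g) :
    T i u (Finsupp.single v 1) =
      (sg i u v * cf u (v i) * gd (up i u v)) • (Finsupp.single (up i u v) (1 : ℚ)) := by
  simp [T]

lemma TT_single (i j : Fin n) (u u' : Letter g) (v : Fin n → Letter g) :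
    (T i u * T j u') (Finsupp.single v 1) =
      ((sg j u' v * sg i u (up j u' v)) * (cf u' (v j) * cf u (up j u' v i)) *
        gd (up i u (up j u' v))) • (Finsupp.single (up i u (up j u' v)) (1 : ℚ)) := by
  rw [Module.End.mul_apply, T_single, map_smul, T_single, smul_smul]
  congr 1
  linear_combination (sg j u' v * sg i u (up j u' v) * cf u' (v j) * cf u (up j u' v i)) *
    gd_mul i u (up j u' v)

lemma up_same (i : Fin n) (u u' : Letter g) (v : Fin n → Letter g) :
    up i u (up i u' v) = Function.update v i (rs u (rs u' (v i))) := by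
  simp [up]

lemma TT_same (i : Fin n) (u u' : Letter g) (v : Fin n → Letter g) :
    (T i u * T i u') (Finsupp.single v 1) =
      ((sg i u' v * sg i u v) * (cf u' (v i) * cf u (rs u' (v i))) *
        gd (Function.update v i (rs u (rs u' (v i))))) •
          (Finsupp.single (Function.update v i (rs u (rs u' (v i)))) (1 : ℚ)) := by
  rw [TT_single, up_same]
  simp [up, sg_update_ge i i le_rfl]

lemma T_ext {A B : Module.End ℚ (V n g)}
    (h : ∀ v, A (Finsupp.single v 1) = B (Finsupp.single v 1)) : A = B := by
  refine Finsupp.lhom_ext' fun v => LinearMap.ext_ring ?_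
  simpa using h v

lemma koszul_lt (i j : Fin n) (h : i < j) (u u' : Letter g) :
    T i u * T j u' = kz u u' • (T j u' * T i u) := by
  refine T_ext fun v => ?_
  rw [LinearMap.smul_apply, TT_single, TT_single, smul_smul]
  have hu : up i u (up j u' v) = up j u' (up i u v) := by
    simp only [up, Function.update_of_ne h.ne, Function.update_of_ne h.ne']
    rw [Function.update_comm h.ne]
  have h1 : up j u' v i = v i := by simp [up, Function.update_of_ne h.ne]
  have h2 : up i u v j = v j := by simp [up, Function.update_of_ne h.ne']
  rw [hu, h1, h2]
  congr 1
  by_cases hc : cf u (v i) = 0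
  · simp [hc]
  have h3 : sg i u (up j u' v) = sg i u v := sg_update_ge i j h.le _ _ _
  have h4 : sg j u' (up i u v) = kz u' u * sg j u' v := sg_update_lt j i h _ _ _ hc
  rw [h3, h4, kz_comm u' u]
  linear_combination (-1 : ℚ) * (sg i u v * sg j u' v * cf u (v i) * cf u' (v j) *
    gd (up j u' (up i u v))) * kz_sq u u'

lemma koszul_T (i j : Fin n) (u u' : Letter g) :
    T i u * T j u' = kz u u' • (T j u' * T i u) := by
  rcases lt_trichotomy i j with h | h | h
  · exact koszul_lt i j h u u'
  · subst h
    refine T_ext fun v => ?_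
    rw [LinearMap.smul_apply, TT_same, TT_same, smul_smul, rs_comm u u', cf_comm]
    congr 1
    ring
  · rw [koszul_lt j i h u' u, smul_smul, kz_comm u' u, kz_sq, one_smul]

lemma TT_zero (i : Fin n) (u u' : Letter g) (h : ∀ l, cf u' l * cf u (rs u' l) = 0) :
    T i u * T i u' = 0 := by
  refine T_ext fun v => ?_
  rw [TT_same, h]; simp

lemma TT_exc (i j : Fin n) (hij : i ≠ j) (u u' : Letter g) (hu : u.isExc) (hu' : u'.isExc) :
    T i u * T j u' = 0 := by
  refine T_ext fun v => ?_
  rw [TT_single]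
  have : ¬ Good (up i u (up j u' v)) := by
    intro hG
    refine hij (hG (x := i) (y := j) ?_ ?_)
    · simpa [up] using rs_exc_left u _ hu
    · simpa [up, Function.update_of_ne hij.symm] using rs_exc_left u' _ hu'
  simp [gd, this]

lemma T_ab (i : Fin n) (p : Fin g) : T i (.la p) * T i (.lb p) = T i .lw := by
  refine T_ext fun v => ?_
  rw [TT_same, T_single]
  have h1 : sg i (.lb p) v * sg i (.la p) v = 1 := sg_sq i (.la p) v
  have h2 : sg i .lw v = 1 := by
    unfold sg
    exact Finset.prod_eq_one fun k _ => by simp [kz, ldeg, pow_mul]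
  have h3 : ∀ l : Letter g, cf (.lb p) l * cf (.la p) (rs (.lb p) l) = cf .lw l := by
    intro l; cases l <;> simp [cf, rs]
  have h4 : ∀ l : Letter g, rs (.la p) (rs (.lb p) l) = rs .lw l := by
    intro l; cases l <;> simp [rs]
  rw [h1, h2, h3, h4]
  rfl

/-- slot and letter of a generator -/
def slot : SurfGen n g → Fin n
  | .a i _ => i
  | .b i _ => i
  | .w i => i

def lett : SurfGen n g → Letter g
  | .a _ p => .la p
  | .b _ p => .lb p
  | .w _ => .lw

lemma deg_lett (u : SurfGen n g) : ldeg (lett u) = u.deg := by cases u <;> rfl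

noncomputable def rho0 : FreeAlgebra ℚ (SurfGen n g) →ₐ[ℚ] Module.End ℚ (V n g) :=
  FreeAlgebra.lift ℚ fun u => T (slot u) (lett u)

lemma rho0_rel {x y : FreeAlgebra ℚ (SurfGen n g)} (h : SurfRel n g x y) :
    rho0 x = rho0 y := by
  cases h with
  | aa i p q =>
    simp only [rho0, map_mul, FreeAlgebra.lift_ι_apply, map_zero, slot, lett]
    exact TT_zero _ _ _ fun l => by cases l <;> simp [cf, rs]
  | bb i p q =>
    simp only [rho0, map_mul, FreeAlgebra.lift_ι_apply, map_zero, slot, lett]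
    exact TT_zero _ _ _ fun l => by cases l <;> simp [cf, rs]
  | ab_eq i p =>
    simp only [rho0, map_mul, FreeAlgebra.lift_ι_apply, slot, lett]
    exact T_ab i p
  | ab_ne i p q hpq =>
    simp only [rho0, map_mul, FreeAlgebra.lift_ι_apply, map_zero, slot, lett]
    exact TT_zero _ _ _ fun l => by cases l <;> simp [cf, rs, hpq]
  | koszul u v =>
    simp only [rho0, map_mul, map_smul, FreeAlgebra.lift_ι_apply]
    rw [koszul_T]; simp only [kz, deg_lett]

noncomputable def rho1 : SurfCoh n g →ₐ[ℚ] Module.End ℚ (V n g) :=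
  RingQuot.liftAlgHom ℚ ⟨rho0, fun _ _ h => rho0_rel h⟩

lemma rho1_mk (x : FreeAlgebra ℚ (SurfGen n g)) :
    rho1 (RingQuot.mkAlgHom ℚ (SurfRel n g) x : SurfCoh n g) = rho0 x :=
  RingQuot.liftAlgHom_mkAlgHom_apply ..

lemma rho1_gA (i : Fin n) (p : Fin g) : rho1 (gA i p) = T i (.la p) := by
  refine (rho1_mk _).trans ?_
  simp [rho0, slot, lett]

lemma rho1_gB (i : Fin n) (p : Fin g) : rho1 (gB i p) = T i (.lb p) := by
  refine (rho1_mk _).trans ?_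
  simp [rho0, slot, lett]

lemma rho1_gW (i : Fin n) : rho1 (gW i : SurfCoh n g) = T i .lw := by
  refine (rho1_mk _).trans ?_
  simp [rho0, slot, lett]

variable [NeZero n]

lemma gX_eq (i : Fin n) (p : Fin g) (h : p ≠ 0) : gX i p = gA i p := by simp [gX, h]
lemma gY_eq (i : Fin n) (p : Fin g) (h : p ≠ 0) : gY i p = gB i p := by simp [gY, h]

lemma rho1_rel {x y : SurfCoh n g} (h : ARel n g x y) : rho1 x = rho1 y := by
  cases h with
  | xx i j p q hij hp hq =>
    rw [gX_eq _ _ hp, gX_eq _ _ hq, map_mul, map_zero, rho1_gA, rho1_gA]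
    exact TT_exc _ _ hij _ _ hp hq
  | xy i j p q hij hp hq =>
    rw [gX_eq _ _ hp, gY_eq _ _ hq, map_mul, map_zero, rho1_gA, rho1_gB]
    exact TT_exc _ _ hij _ _ hp hq
  | yy i j p q hij hp hq =>
    rw [gY_eq _ _ hp, gY_eq _ _ hq, map_mul, map_zero, rho1_gB, rho1_gB]
    exact TT_exc _ _ hij _ _ hp hq

noncomputable def rho : SurfA n g →ₐ[ℚ] Module.End ℚ (V n g) :=
  RingQuot.liftAlgHom ℚ ⟨rho1, fun _ _ h => rho1_rel h⟩

lemma rho_toA (x : SurfCoh n g) : rho (toA n g x) = rho1 x :=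
  RingQuot.liftAlgHom_mkAlgHom_apply ..

lemma act (k : Fin n) (u : Letter g) (w : Fin n → Letter g) (hw : ∀ j ≤ k, w j = .one)
    (hg : Good (Function.update w k u)) :
    rho1 (u.evalAB k) (Finsupp.single w 1) = Finsupp.single (Function.update w k u) (1 : ℚ) := by
  have hT : T k u (Finsupp.single w 1) = Finsupp.single (Function.update w k u) (1 : ℚ) := by
    rw [T_single]
    have h1 : sg k u w = 1 := by
      unfold sg
      refine Finset.prod_eq_one fun j hj => ?_
      have : j < k := by simpa using hj
      rw [hw j this.le, kz_one]
    have h2 : up k u w = Function.update w k u := by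
      simp [up, hw k le_rfl, rs_one]
    rw [h1, h2, hw k le_rfl, cf_one]
    simp [gd, hg]
  cases u with
  | one =>
    have : Function.update w k .one = w := by rw [← hw k le_rfl]; simp
    rw [this]; simp [Letter.evalAB]
  | la p => simpa [Letter.evalAB, rho1_gA] using hT
  | lb p => simpa [Letter.evalAB, rho1_gB] using hT
  | lw => simpa [Letter.evalAB, rho1_gW] using hT

lemma act_list (v : Fin n → Letter g) (hv : Good v) (l : List (Fin n))
    (hl : l.Pairwise (· < ·)) :
    rho1 (l.map fun k => (v k).evalAB k).prod (Finsupp.single (fun _ => .one) 1) =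
      Finsupp.single (fun k => if k ∈ l then v k else .one) (1 : ℚ) := by
  induction l with
  | nil => simp
  | cons k l ih =>
    rw [List.pairwise_cons] at hl
    rw [List.map_cons, List.prod_cons, map_mul, Module.End.mul_apply, ih hl.2]
    have e : Function.update (fun j => if j ∈ l then v j else .one) k (v k) =
        fun j => if j ∈ k :: l then v j else .one := by
      funext j
      by_cases hj : j = k
      · subst hj; simp
      · simp [Function.update_of_ne hj, hj]
    rw [act, e]
    · intro j hj
      rw [if_neg]
      intro hjl
      exact absurd (hl.1 j hjl) (not_lt.mpr hj)
    · rw [e]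
      have key : ∀ j, (if j ∈ k :: l then v j else Letter.one).isExc → (v j).isExc := by
        intro j hj
        split_ifs at hj with h
        · exact hj
        · exact hj.elim
      intro a ha b hb
      exact hv (key a ha) (key b hb)

lemma rho_basis (v : {v : Fin n → Letter g // {i : Fin n | (v i).isExc}.Subsingleton}) :
    rho (basisFunAB n g v) (Finsupp.single (fun _ => .one) 1) = Finsupp.single v.1 (1 : ℚ) := by
  unfold basisFunAB
  rw [rho_toA, monAB_eq, act_list v.1 v.2 _ (List.pairwise_lt_finRange n)]
  simp

lemma linInd : LinearIndependent ℚ (basisFunAB n g) := by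
  let f : SurfA n g →ₗ[ℚ] V n g :=
    (LinearMap.applyₗ (Finsupp.single (fun _ => .one) (1 : ℚ))).comp rho.toLinearMap
  apply LinearIndependent.of_comp f
  have : f ∘ basisFunAB n g = fun v => Finsupp.single v.1 (1 : ℚ) := by
    funext v
    exact rho_basis v
  rw [this]
  have h := Finsupp.linearIndependent_single_one ℚ (Fin n → Letter g)
  exact h.comp (fun v : {v : Fin n → Letter g // _} => v.1) Subtype.val_injective

end

/-! Spanning -/

lemma mk_rel {x y : FreeAlgebra ℚ (SurfGen n g)} (h : SurfRel n g x y) :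
    (RingQuot.mkAlgHom ℚ (SurfRel n g) x : SurfCoh n g) = RingQuot.mkAlgHom ℚ (SurfRel n g) y :=
  RingQuot.mkAlgHom_rel ℚ h

noncomputable def mk : FreeAlgebra ℚ (SurfGen n g) →ₐ[ℚ] SurfCoh n g :=
  RingQuot.mkAlgHom ℚ (SurfRel n g)

lemma mk_rel' {x y : FreeAlgebra ℚ (SurfGen n g)} (h : SurfRel n g x y) :
    mk x = mk y := RingQuot.mkAlgHom_rel ℚ h

lemma aa (i : Fin n) (p q : Fin g) : gA i p * gA i q = 0 := by
  have := mk_rel' (SurfRel.aa i p q)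
  rwa [map_mul, map_zero] at this

lemma bb (i : Fin n) (p q : Fin g) : gB i p * gB i q = 0 := by
  have := mk_rel' (SurfRel.bb i p q)
  rwa [map_mul, map_zero] at this

lemma ab (i : Fin n) (p : Fin g) : gA i p * gB i p = gW i := by
  have := mk_rel' (SurfRel.ab_eq i p)
  rwa [map_mul] at this

lemma ab_ne (i : Fin n) (p q : Fin g) (h : p ≠ q) : gA i p * gB i q = 0 := by
  have := mk_rel' (SurfRel.ab_ne i p q h)
  rwa [map_mul, map_zero] at this

lemma kosz (u v : SurfGen n g) : mk (FreeAlgebra.ι ℚ u) * mk (FreeAlgebra.ι ℚ v) =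
    ((-1 : ℚ) ^ (u.deg * v.deg)) • (mk (FreeAlgebra.ι ℚ v) * mk (FreeAlgebra.ι ℚ u)) := by
  have := mk_rel' (SurfRel.koszul u v)
  rwa [map_mul, map_smul, map_mul] at this

lemma ev_gen (i : Fin n) (u : Letter g) : u = .one ∨
    ∃ s : SurfGen n g, s.deg = ldeg u ∧ u.evalAB i = mk (FreeAlgebra.ι ℚ s) := by
  cases u with
  | one => exact Or.inl rfl
  | la p => exact Or.inr ⟨.a i p, rfl, rfl⟩
  | lb p => exact Or.inr ⟨.b i p, rfl, rfl⟩
  | lw => exact Or.inr ⟨.w i, rfl, rfl⟩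

lemma ev_comm (i j : Fin n) (u l : Letter g) :
    u.evalAB i * l.evalAB j = kz u l • (l.evalAB j * u.evalAB i) := by
  rcases ev_gen i u with h | ⟨s, hs, h⟩
  · subst h; simp [Letter.evalAB, kz, ldeg]
  rcases ev_gen j l with h' | ⟨t, ht, h'⟩
  · subst h'; simp [Letter.evalAB, kz, ldeg]
  rw [h, h', kosz, kz, hs, ht]

lemma ba (i j : Fin n) (p q : Fin g) : gB i p * gA j q = - (gA j q * gB i p) := by
  have := ev_comm i j (.lb p) (.la q)
  simpa [Letter.evalAB, kz, ldeg] using this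

lemma aw (i : Fin n) (p : Fin g) : gA i p * gW i = 0 := by
  rw [← ab i p, ← mul_assoc, aa, zero_mul]

lemma bw (i : Fin n) (p : Fin g) : gB i p * gW i = 0 := by
  rw [← ab i p, ← mul_assoc, ba, neg_mul, mul_assoc, bb, mul_zero, neg_zero]

lemma wa (i : Fin n) (p : Fin g) : gW i * gA i p = 0 := by
  rw [← ab i p, mul_assoc, ba, mul_neg, ← mul_assoc, aa, zero_mul, neg_zero]

lemma wb (i : Fin n) (p : Fin g) : gW i * gB i p = 0 := by
  rw [← ab i p, mul_assoc, bb, mul_zero]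

lemma ww [NeZero g] (i : Fin n) : (gW i * gW i : SurfCoh n g) = 0 := by
  nth_rw 2 [← ab i 0]
  rw [← mul_assoc, wa, zero_mul]

lemma ev_mul [NeZero g] (i : Fin n) (u l : Letter g) :
    u.evalAB i * l.evalAB i = cf u l • (rs u l).evalAB i := by
  cases u with
  | one => simp [Letter.evalAB, cf, rs]
  | la p =>
    cases l with
    | one => simp [Letter.evalAB, cf, rs]
    | la q => simp [Letter.evalAB, cf, rs, aa]
    | lb q =>
      by_cases h : p = q
      · subst h; simp [Letter.evalAB, cf, rs, ab]
      · simp [Letter.evalAB, cf, rs, ab_ne _ _ _ h, h]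
    | lw => simp [Letter.evalAB, cf, rs, aw]
  | lb p =>
    cases l with
    | one => simp [Letter.evalAB, cf, rs]
    | lb q => simp [Letter.evalAB, cf, rs, bb]
    | la q =>
      by_cases h : p = q
      · subst h; simp [Letter.evalAB, cf, rs, ba, ab]
      · simp [Letter.evalAB, cf, rs, ba, ab_ne _ _ _ (Ne.symm h), h]
    | lw => simp [Letter.evalAB, cf, rs, bw]
  | lw =>
    cases l with
    | one => simp [Letter.evalAB, cf, rs]
    | la q => simp [Letter.evalAB, cf, rs, wa]
    | lb q => simp [Letter.evalAB, cf, rs, wb]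
    | lw => simp [Letter.evalAB, cf, rs, ww]

lemma mul_list [NeZero g] (i : Fin n) (u : Letter g) (v : Fin n → Letter g) (l : List (Fin n))
    (hl : l.Nodup) (hi : i ∈ l) : ∃ s : ℚ, s ≠ 0 ∧
      u.evalAB i * (l.map fun k => (v k).evalAB k).prod =
        (s * cf u (v i)) • (l.map fun k => (up i u v k).evalAB k).prod := by
  induction l with
  | nil => simp at hi
  | cons k l ih =>
    rw [List.nodup_cons] at hl
    by_cases hk : i = k
    · subst hk
      refine ⟨1, one_ne_zero, ?_⟩
      have e : (l.map fun k => (up i u v k).evalAB k) = l.map fun k => (v k).evalAB k := by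
        refine List.map_congr_left fun j hj => ?_
        have : j ≠ i := fun h => hl.1 (h ▸ hj)
        simp [up, Function.update_of_ne this]
      rw [List.map_cons, List.map_cons, List.prod_cons, List.prod_cons, e, ← mul_assoc, ev_mul,
        one_mul, smul_mul_assoc]
      simp [up]
    · have hi' : i ∈ l := by simpa [hk] using hi
      obtain ⟨s, hs, h⟩ := ih hl.2 hi'
      refine ⟨kz u (v k) * s, mul_ne_zero (kz_ne _ _) hs, ?_⟩
      have e : up i u v k = v k := by simp [up, Function.update_of_ne (Ne.symm hk)]
      rw [List.map_cons, List.map_cons, List.prod_cons, List.prod_cons, e, ← mul_assoc,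
        ev_comm i k, smul_mul_assoc, mul_assoc, h, mul_smul_comm, smul_smul, mul_assoc]

lemma mul_mon [NeZero g] (i : Fin n) (u : Letter g) (v : Fin n → Letter g) : ∃ s : ℚ, s ≠ 0 ∧
      u.evalAB i * monAB v = (s * cf u (v i)) • monAB (up i u v) := by
  simp only [monAB_eq]
  exact mul_list i u v _ (List.nodup_finRange n) (List.mem_finRange i)

lemma mon_extract [NeZero g] (i : Fin n) (v : Fin n → Letter g) : ∃ s : ℚ,
      monAB v = s • ((v i).evalAB i * monAB (Function.update v i .one)) := by
  obtain ⟨s, hs, h⟩ := mul_mon i (v i) (Function.update v i .one)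
  refine ⟨s⁻¹, ?_⟩
  rw [h, Function.update_self, cf_one, mul_one, smul_smul, inv_mul_cancel₀ hs, one_smul]
  simp [up, rs_one]

section
variable [NeZero n] [NeZero g]

lemma toA_rel {x y : SurfCoh n g} (h : ARel n g x y) : toA n g x = toA n g y :=
  RingQuot.mkAlgHom_rel ℚ h

/-- exceptional degree-one letter -/
def Exc1 (u : Letter g) : Prop := ∃ p : Fin g, p ≠ 0 ∧ (u = .la p ∨ u = .lb p)

lemma exc1_mul (i j : Fin n) (hij : i ≠ j) (u u' : Letter g) (h : Exc1 u) (h' : Exc1 u') :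
    toA n g (u.evalAB i * u'.evalAB j) = 0 := by
  obtain ⟨p, hp, rfl | rfl⟩ := h <;> obtain ⟨q, hq, rfl | rfl⟩ := h'
  · have := toA_rel (ARel.xx i j p q hij hp hq)
    rwa [gX_eq _ _ hp, gX_eq _ _ hq, map_zero] at this
  · have := toA_rel (ARel.xy i j p q hij hp hq)
    rwa [gX_eq _ _ hp, gY_eq _ _ hq, map_zero] at this
  · have := toA_rel (ARel.xy j i q p hij.symm hq hp)
    rw [gX_eq _ _ hq, gY_eq _ _ hp, map_zero] at this
    simp only [Letter.evalAB]
    rw [ba, map_neg, this, neg_zero]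
  · have := toA_rel (ARel.yy i j p q hij hp hq)
    rwa [gY_eq _ _ hp, gY_eq _ _ hq, map_zero] at this

lemma exc_left (hg : 2 ≤ g) (i : Fin n) (u : Letter g) (h : u.isExc) :
    ∃ z : SurfCoh n g, ∃ u', Exc1 u' ∧ u.evalAB i = z * u'.evalAB i := by
  cases u with
  | one => exact h.elim
  | la p => exact ⟨1, .la p, ⟨p, h, Or.inl rfl⟩, by simp⟩
  | lb p => exact ⟨1, .lb p, ⟨p, h, Or.inr rfl⟩, by simp⟩
  | lw =>
    refine ⟨gA i ⟨1, hg⟩, .lb ⟨1, hg⟩, ⟨⟨1, hg⟩, ?_, Or.inr rfl⟩, (ab i _).symm⟩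
    simp [Fin.ext_iff]

lemma exc_right (hg : 2 ≤ g) (i : Fin n) (u : Letter g) (h : u.isExc) :
    ∃ z : SurfCoh n g, ∃ u', Exc1 u' ∧ u.evalAB i = u'.evalAB i * z := by
  cases u with
  | one => exact h.elim
  | la p => exact ⟨1, .la p, ⟨p, h, Or.inl rfl⟩, by simp⟩
  | lb p => exact ⟨1, .lb p, ⟨p, h, Or.inr rfl⟩, by simp⟩
  | lw =>
    refine ⟨gB i ⟨1, hg⟩, .la ⟨1, hg⟩, ⟨⟨1, hg⟩, ?_, Or.inl rfl⟩, (ab i _).symm⟩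
    simp [Fin.ext_iff]

lemma bad_zero (hg : 2 ≤ g) (v : Fin n → Letter g) (hv : ¬ Good v) : toA n g (monAB v) = 0 := by
  unfold Good at hv
  rw [Set.not_subsingleton_iff] at hv
  obtain ⟨i, hi, j, hj, hij⟩ := hv
  obtain ⟨s, hs⟩ := mon_extract i v
  obtain ⟨t, ht⟩ := mon_extract j (Function.update v i .one)
  rw [Function.update_of_ne hij.symm] at ht
  obtain ⟨z, u, hu, e⟩ := exc_left hg i _ hi
  obtain ⟨z', u', hu', e'⟩ := exc_right hg j _ hj
  have h0 := exc1_mul i j hij u u' hu hu'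
  rw [map_mul] at h0
  rw [hs, ht, e, e']
  simp only [map_smul, map_mul, mul_smul_comm]
  rw [mul_assoc (toA n g z), mul_assoc (toA n g (u'.evalAB j)),
    ← mul_assoc (toA n g (u.evalAB i)), h0]
  simp

lemma toA_surj : Function.Surjective (toA n g) := RingQuot.mkAlgHom_surjective ℚ (ARel n g)
lemma mk_surj : Function.Surjective (mk : _ → SurfCoh n g) :=
  RingQuot.mkAlgHom_surjective ℚ (SurfRel n g)

lemma mon_mem (hg : 2 ≤ g) (v : Fin n → Letter g) :
    toA n g (monAB v) ∈ Submodule.span ℚ (Set.range (basisFunAB n g)) := by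
  by_cases h : Good v
  · exact Submodule.subset_span ⟨⟨v, h⟩, rfl⟩
  · rw [bad_zero hg v h]; exact zero_mem _

lemma gen_mul (hg : 2 ≤ g) (s : SurfGen n g) (x : SurfA n g)
    (hx : x ∈ Submodule.span ℚ (Set.range (basisFunAB n g))) :
    toA n g (mk (FreeAlgebra.ι ℚ s)) * x ∈ Submodule.span ℚ (Set.range (basisFunAB n g)) := by
  have hs : mk (FreeAlgebra.ι ℚ s) = (lett s).evalAB (slot s) := by cases s <;> rfl
  rw [hs]
  induction hx using Submodule.span_induction with
  | mem x hx =>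
    obtain ⟨v, rfl⟩ := hx
    unfold basisFunAB
    obtain ⟨c, -, h⟩ := mul_mon (slot s) (lett s) v.1
    rw [← map_mul, h, map_smul]
    exact Submodule.smul_mem _ _ (mon_mem hg _)
  | zero => simp
  | add x y _ _ hx hy => rw [mul_add]; exact add_mem hx hy
  | smul c x _ hx => rw [mul_smul_comm]; exact Submodule.smul_mem _ _ hx

lemma all_mul (hg : 2 ≤ g) (y : FreeAlgebra ℚ (SurfGen n g)) : ∀ x : SurfA n g,
    x ∈ Submodule.span ℚ (Set.range (basisFunAB n g)) →
    toA n g (mk y) * x ∈ Submodule.span ℚ (Set.range (basisFunAB n g)) := by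
  induction y using FreeAlgebra.induction with
  | grade0 r =>
    intro x hx
    rw [AlgHom.commutes, AlgHom.commutes, ← Algebra.smul_def]
    exact Submodule.smul_mem _ _ hx
  | grade1 s => exact gen_mul hg s
  | mul a b ha hb =>
    intro x hx
    rw [map_mul, map_mul, mul_assoc]
    exact ha _ (hb _ hx)
  | add a b ha hb =>
    intro x hx
    rw [map_add, map_add, add_mul]
    exact add_mem (ha _ hx) (hb _ hx)

lemma spanTop (hg : 2 ≤ g) : Submodule.span ℚ (Set.range (basisFunAB n g)) = ⊤ := by
  rw [eq_top_iff]
  intro x _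
  obtain ⟨y, rfl⟩ := toA_surj x
  obtain ⟨z, rfl⟩ := mk_surj y
  have h1 : (1 : SurfA n g) ∈ Submodule.span ℚ (Set.range (basisFunAB n g)) := by
    have := mon_mem hg (fun _ : Fin n => (Letter.one : Letter g))
    have e : monAB (fun _ : Fin n => (Letter.one : Letter g)) = 1 := by
      rw [monAB_eq]
      simp [Letter.evalAB]
    rwa [e, map_one] at this
  simpa using all_mul hg z 1 h1

end

end SurfProof

/-- The images in `A_g` (`g ≥ 2`, `n ≥ 2`) of the monomials `u_1 ⋯ u_n` with
each `u_i ∈ {1, a_i(p), b_i(p), ω_i : 1 ≤ p ≤ g}` and at most one `u_i` in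
`{a_i(p), b_i(p), ω_i : 2 ≤ p ≤ g}` form an additive (ℚ-vector space) basis of `A_g`. -/
theorem stmt5 (n g : ℕ) [NeZero n] [NeZero g] (hn : 2 ≤ n) (hg : 2 ≤ g) :
    LinearIndependent ℚ (basisFunAB n g) ∧
      Submodule.span ℚ (Set.range (basisFunAB n g)) = ⊤ := by
  exact ⟨SurfProof.linInd, SurfProof.spanTop hg⟩
end

section
/- In A_g (g ≥ 2, n ≥ 2), for 2 ≤ j ≤ n and any v_1⋯v_n in the basis β'_2 with v_j ∈ {x_j(p), y_j(p), ω_j : 1 ≤ p ≤ g}, the product v_1⋯v_n · x_j y_j vanishes. -/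
section Helpers

theorem h_list_prod_zero {R : Type*} [Ring R] (E z : R) (l : List R) (hz : z ∈ l)
    (hc : ∀ u ∈ l, u * E = E * u) (h0 : z * E = 0) : l.prod * E = 0 := by
  induction l with
  | nil => simp at hz
  | cons u t ih =>
    have hcomm : t.prod * E = E * t.prod := by
      clear ih hz
      induction t with
      | nil => simp
      | cons w t ih2 =>
        have h1 : t.prod * E = E * t.prod := ih2 (fun x hx => hc x (by
          simp only [List.mem_cons] at hx ⊢; tauto))
        have h2 := hc w (by simp)
        rw [List.prod_cons, mul_assoc, h1, ← mul_assoc, h2, mul_assoc]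
    rw [List.prod_cons]
    rcases List.mem_cons.1 hz with rfl | hz
    · rw [mul_assoc, hcomm, ← mul_assoc, h0, zero_mul]
    · rw [mul_assoc, ih hz (fun x hx => hc x (List.mem_cons_of_mem _ hx)), mul_zero]

theorem h_comm_mul {R : Type*} [Ring R] (u x y : R) (hx : u * x = -(x * u))
    (hy : u * y = -(y * u)) : u * (x * y) = x * y * u := by
  rw [← mul_assoc, hx, neg_mul, mul_assoc, hy, mul_neg, neg_neg, mul_assoc]

variable {n g : ℕ}

noncomputable def hGen (u : SurfGen n g) : SurfCoh n g :=
  RingQuot.mkAlgHom ℚ (SurfRel n g) (FreeAlgebra.ι ℚ u)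

theorem h_koszul (u v : SurfGen n g) :
    hGen u * hGen v = ((-1 : ℚ) ^ (u.deg * v.deg)) • (hGen v * hGen u) := by
  have h := RingQuot.mkAlgHom_rel ℚ (SurfRel.koszul u v)
  rw [map_mul, map_smul, map_mul] at h
  exact h

theorem h_AA (i k : Fin n) (p q : Fin g) : (gA i p * gA k q : SurfCoh n g) = -(gA k q * gA i p) := by
  have h := h_koszul (SurfGen.a i p) (SurfGen.a k q)
  simp [SurfGen.deg] at h
  exact h

theorem h_AB (i k : Fin n) (p q : Fin g) : (gA i p * gB k q : SurfCoh n g) = -(gB k q * gA i p) := by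
  have h := h_koszul (SurfGen.a i p) (SurfGen.b k q)
  simp [SurfGen.deg] at h
  exact h

theorem h_BB (i k : Fin n) (p q : Fin g) : (gB i p * gB k q : SurfCoh n g) = -(gB k q * gB i p) := by
  have h := h_koszul (SurfGen.b i p) (SurfGen.b k q)
  simp [SurfGen.deg] at h
  exact h

theorem h_WA (i k : Fin n) (q : Fin g) : (gW i * gA k q : SurfCoh n g) = gA k q * gW i := by
  have h := h_koszul (SurfGen.w i) (SurfGen.a k q)
  simp [SurfGen.deg] at h
  exact h

theorem h_WB (i k : Fin n) (q : Fin g) : (gW i * gB k q : SurfCoh n g) = gB k q * gW i := by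
  have h := h_koszul (SurfGen.w i) (SurfGen.b k q)
  simp [SurfGen.deg] at h
  exact h

theorem h_aa (i : Fin n) (p q : Fin g) : (gA i p * gA i q : SurfCoh n g) = 0 := by
  have h := RingQuot.mkAlgHom_rel ℚ (SurfRel.aa i p q)
  rw [map_mul, map_zero] at h
  exact h

theorem h_bb (i : Fin n) (p q : Fin g) : (gB i p * gB i q : SurfCoh n g) = 0 := by
  have h := RingQuot.mkAlgHom_rel ℚ (SurfRel.bb i p q)
  rw [map_mul, map_zero] at h
  exact h

theorem h_ab_eq (i : Fin n) (p : Fin g) : (gA i p * gB i p : SurfCoh n g) = gW i := by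
  have h := RingQuot.mkAlgHom_rel ℚ (SurfRel.ab_eq i p)
  rw [map_mul] at h
  exact h

theorem h_ab_ne (i : Fin n) (p q : Fin g) (hpq : p ≠ q) :
    (gA i p * gB i q : SurfCoh n g) = 0 := by
  have h := RingQuot.mkAlgHom_rel ℚ (SurfRel.ab_ne i p q hpq)
  rw [map_mul, map_zero] at h
  exact h

variable [NeZero n] [NeZero g]

theorem h_BA (i k : Fin n) (p q : Fin g) : (gB i p * gA k q : SurfCoh n g) = -(gA k q * gB i p) := by
  rw [h_AB, neg_neg]

theorem h_XX (i k : Fin n) (p q : Fin g) : (gX i p * gX k q : SurfCoh n g) = -(gX k q * gX i p) := by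
  unfold gX
  split_ifs <;> (try simp only [mul_sub, sub_mul]) <;>
    simp only [h_AA i k p q, h_AA 0 k p q, h_AA i 0 p q, h_AA 0 0 p q] <;> abel

theorem h_XY (i k : Fin n) (p q : Fin g) : (gX i p * gY k q : SurfCoh n g) = -(gY k q * gX i p) := by
  unfold gX gY
  split_ifs <;> simp only [mul_sub, sub_mul, h_AB] <;> abel

theorem h_YY (i k : Fin n) (p q : Fin g) : (gY i p * gY k q : SurfCoh n g) = -(gY k q * gY i p) := by
  unfold gY
  split_ifs <;> (try simp only [mul_sub, sub_mul]) <;>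
    simp only [h_BB i k p q, h_BB 0 k p q, h_BB i 0 p q, h_BB 0 0 p q] <;> abel

theorem h_WX (i k : Fin n) (q : Fin g) : (gW i * gX k q : SurfCoh n g) = gX k q * gW i := by
  unfold gX
  split_ifs <;> simp only [mul_sub, sub_mul, h_WA]

theorem h_WY (i k : Fin n) (q : Fin g) : (gW i * gY k q : SurfCoh n g) = gY k q * gW i := by
  unfold gY
  split_ifs <;> simp only [mul_sub, sub_mul, h_WB]

theorem h_letter_comm (i j : Fin n) (l : Letter g) :
    (l.evalXY i * (gX j 0 * gY j 0) : SurfCoh n g) = gX j 0 * gY j 0 * l.evalXY i := by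
  cases l with
  | one => simp [Letter.evalXY]
  | la p => exact h_comm_mul _ _ _ (h_XX _ _ _ _) (h_XY _ _ _ _)
  | lb p => exact h_comm_mul _ _ _ (by rw [Letter.evalXY, h_XY, neg_neg]) (h_YY _ _ _ _)
  | lw =>
    change gW i * (gX j 0 * gY j 0) = gX j 0 * gY j 0 * gW i
    rw [← mul_assoc, h_WX, mul_assoc, h_WY, mul_assoc]

theorem h_gX_ne (i : Fin n) (p : Fin g) (hp : p ≠ 0) : (gX i p : SurfCoh n g) = gA i p := by
  simp [gX, hp]

theorem h_gY_ne (i : Fin n) (p : Fin g) (hp : p ≠ 0) : (gY i p : SurfCoh n g) = gB i p := by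
  simp [gY, hp]

theorem h_rel_xx (i k : Fin n) (p q : Fin g) (h : i ≠ k) (hp : p ≠ 0) (hq : q ≠ 0) :
    toA n g (gA i p * gA k q) = 0 := by
  have h := RingQuot.mkAlgHom_rel ℚ (ARel.xx i k p q h hp hq)
  rw [h_gX_ne _ _ hp, h_gX_ne _ _ hq] at h
  rw [map_zero] at h
  exact h

theorem h_rel_xy (i k : Fin n) (p q : Fin g) (h : i ≠ k) (hp : p ≠ 0) (hq : q ≠ 0) :
    toA n g (gA i p * gB k q) = 0 := by
  have h := RingQuot.mkAlgHom_rel ℚ (ARel.xy i k p q h hp hq)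
  rw [h_gX_ne _ _ hp, h_gY_ne _ _ hq] at h
  rw [map_zero] at h
  exact h

theorem h_rel_yx (i k : Fin n) (p q : Fin g) (h : i ≠ k) (hp : p ≠ 0) (hq : q ≠ 0) :
    toA n g (gB i p * gA k q) = 0 := by
  rw [h_BA, map_neg, h_rel_xy k i q p h.symm hq hp, neg_zero]

/-- `x_j y_j` expanded. -/
theorem h_xy_expand (j : Fin n) (hj : j ≠ 0) :
    (gX j 0 * gY j 0 : SurfCoh n g) = gW j - gA j 0 * gB 0 0 - gA 0 0 * gB j 0 + gW 0 := by
  simp only [gX, gY, hj, ne_eq, not_false_eq_true, and_self, if_true]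
  simp only [mul_sub, sub_mul, h_ab_eq]
  abel

theorem h_A_W (j : Fin n) (p : Fin g) : (gA j p * gW j : SurfCoh n g) = 0 := by
  rw [← h_ab_eq j p, ← mul_assoc, h_aa, zero_mul]

theorem h_B_W (j : Fin n) (p : Fin g) : (gB j p * gW j : SurfCoh n g) = 0 := by
  rw [← h_WB, ← h_ab_eq j p, mul_assoc, h_bb, mul_zero]

theorem h_letter_zero (hg : 2 ≤ g) (j : Fin n) (hj : j ≠ 0) (l : Letter g) (hl : l ≠ Letter.one) :
    toA n g (l.evalXY j * (gX j 0 * gY j 0)) = 0 := by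
  obtain ⟨r, hr⟩ : ∃ r : Fin g, r ≠ 0 := by
    refine ⟨⟨1, hg⟩, fun h => ?_⟩
    have := congrArg Fin.val h
    simp at this
  have hAW : ∀ p : Fin g, p ≠ 0 → toA n g (gA j p * gW 0) = 0 := fun p hp => by
    rw [← h_ab_eq 0 r, ← mul_assoc, map_mul, h_rel_xx _ _ _ _ hj hp hr, zero_mul]
  have hBW : ∀ p : Fin g, p ≠ 0 → toA n g (gB j p * gW 0) = 0 := fun p hp => by
    rw [← h_ab_eq 0 r, ← mul_assoc, map_mul, h_rel_yx _ _ _ _ hj hp hr, zero_mul]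
  cases l with
  | one => exact absurd rfl hl
  | la p =>
    change toA n g (gX j p * (gX j 0 * gY j 0)) = 0
    by_cases hp : p = 0
    · subst hp
      have h0 : (gX j 0 * gX j 0 : SurfCoh n g) = 0 := by
        simp only [gX, hj, ne_eq, not_false_eq_true, and_self, if_true]
        simp only [mul_sub, sub_mul, h_aa]
        rw [h_AA j 0]
        abel
      rw [← mul_assoc, h0, zero_mul, map_zero]
    · rw [h_gX_ne _ _ hp, h_xy_expand j hj, mul_add, mul_sub, mul_sub, h_A_W, map_add, hAW p hp,
        ← mul_assoc, h_aa, ← mul_assoc, h_AA j 0 p 0, neg_mul, mul_assoc, h_ab_ne j p 0 hp]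
      simp
  | lb p =>
    change toA n g (gY j p * (gX j 0 * gY j 0)) = 0
    by_cases hp : p = 0
    · subst hp
      have h0 : (gY j 0 * gY j 0 : SurfCoh n g) = 0 := by
        simp only [gY, hj, ne_eq, not_false_eq_true, and_self, if_true]
        simp only [mul_sub, sub_mul, h_bb]
        rw [h_BB j 0]
        abel
      rw [h_XY, mul_neg, ← mul_assoc, h0, zero_mul, neg_zero, map_zero]
    · rw [h_gY_ne _ _ hp, h_xy_expand j hj, mul_add, mul_sub, mul_sub, h_B_W, map_add, hBW p hp,
        ← mul_assoc, h_BA j j p 0, h_ab_ne j 0 p (Ne.symm hp), ← mul_assoc, h_BA j 0 p 0, neg_mul (gA 0 0 * gB j p),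
        mul_assoc (gA 0 0), h_bb]
      simp
  | lw =>
    change toA n g (gW j * (gX j 0 * gY j 0)) = 0
    have hw1 : (gW j * gW j : SurfCoh n g) = 0 := by
      nth_rewrite 1 [← h_ab_eq j 0]
      rw [mul_assoc, h_B_W, mul_zero]
    have hw2 : toA n g (gW j * gW 0) = 0 := by
      rw [← h_ab_eq j r, mul_assoc, map_mul, hBW r hr, mul_zero]
    rw [h_xy_expand j hj, mul_add, mul_sub, mul_sub, hw1, map_add, hw2, ← mul_assoc, h_WA, h_A_W,
      ← mul_assoc, h_WA j 0 0, mul_assoc, h_WB, h_B_W]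
    simp

end Helpers

/-- In `A_g` (`g ≥ 2`, `n ≥ 2`), for `2 ≤ j ≤ n` and any element
`v_1 ⋯ v_n` of the basis `β'₂` whose `j`-th letter `v_j` lies in
`{x_j(p), y_j(p), ω_j : 1 ≤ p ≤ g}`, the product `v_1 ⋯ v_n · x_j y_j` vanishes in `A_g`. -/
theorem stmt8 (n g : ℕ) [NeZero n] [NeZero g] (hn : 2 ≤ n) (hg : 2 ≤ g)
    (j : Fin n) (hj : j ≠ 0) (v : Fin n → Letter g)
    (hbasis : {i : Fin n | (v i).isExc}.Subsingleton)
    (hvj : v j ≠ Letter.one) :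
    toA n g (monXY v) * (xA j * yA j) = 0 := by
  have hl := h_list_prod_zero (toA n g (gX j 0 * gY j 0)) (toA n g ((v j).evalXY j))
    ((List.ofFn fun i : Fin n => (v i).evalXY i).map (toA n g))
    (List.mem_map_of_mem (List.mem_ofFn.2 ⟨j, rfl⟩))
    (by
      intro u hu
      obtain ⟨w, hw, rfl⟩ := List.mem_map.1 hu
      obtain ⟨i, rfl⟩ := List.mem_ofFn.1 hw
      rw [← map_mul, ← map_mul, h_letter_comm])
    (by rw [← map_mul]; exact h_letter_zero hg j hj _ hvj)
  rw [← map_list_prod, map_mul (toA n g) (gX j 0)] at hl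
  exact hl
end

section
/- Let B_g = A_g / J_g (g ≥ 2, n ≥ 2), where J_g is the A_g-ideal generated by all products x_i y_j with i, j ∈ {2,…,n}. Then the B_g-images of the two elements ω_1 x_2 ⋯ x_n and ω_1 y_2 ⋯ y_n are linearly independent over ℚ. -/
/-- The relations defining `B_g = A_g / J_g`: all products `x_i y_j` with
`i, j ∈ {2,…,n}` (including `i = j`) are set to zero. -/
inductive BRel (n g : ℕ) [NeZero n] [NeZero g] : SurfA n g → SurfA n g → Prop
  | mk (i j : Fin n) : i ≠ 0 → j ≠ 0 → BRel n g (xA i * yA j) 0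

/-- The algebra `B_g = A_g / J_g`. -/
def SurfB (n g : ℕ) [NeZero n] [NeZero g] : Type := RingQuot (BRel n g)

noncomputable instance (n g : ℕ) [NeZero n] [NeZero g] : Ring (SurfB n g) :=
  inferInstanceAs (Ring (RingQuot (BRel n g)))

noncomputable instance (n g : ℕ) [NeZero n] [NeZero g] : Algebra ℚ (SurfB n g) :=
  inferInstanceAs (Algebra ℚ (RingQuot (BRel n g)))

/-- The quotient map `A_g → B_g`. -/
noncomputable def toB (n g : ℕ) [NeZero n] [NeZero g] : SurfA n g →ₐ[ℚ] SurfB n g :=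
  RingQuot.mkAlgHom ℚ (BRel n g)

/-- The image of `ω_1 x_2 ⋯ x_n` in `B_g`. -/
noncomputable def elt1 (n g : ℕ) [NeZero n] [NeZero g] : SurfB n g :=
  toB n g (toA n g ((List.ofFn fun i : Fin n => if i = 0 then gW i else gX i 0).prod))

/-- The image of `ω_1 y_2 ⋯ y_n` in `B_g`. -/
noncomputable def elt2 (n g : ℕ) [NeZero n] [NeZero g] : SurfB n g :=
  toB n g (toA n g ((List.ofFn fun i : Fin n => if i = 0 then gW i else gY i 0).prod))

/-- A family of elements satisfying all the relations of `B_g`. -/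
structure GoodFam (n g : ℕ) [NeZero n] [NeZero g] {R : Type} [Ring R]
    (e : Bool → Fin n → Fin g → R) (w : Fin n → R) : Prop where
  anti : ∀ s t i j p q, e s i p * e t j q = -(e t j q * e s i p)
  same : ∀ s i p q, e s i p * e s i q = 0
  eqw : ∀ i p, e false i p * e true i p = w i
  ne : ∀ i p q, p ≠ q → e false i p * e true i q = 0
  cross : ∀ s t i j p q, i ≠ j → p ≠ 0 → q ≠ 0 → e s i p * e t j q = 0
  bb : ∀ i j, (e false i 0 - e false 0 0) * (e true j 0 - e true 0 0) = 0

theorem GoodFam.swap {n g : ℕ} [NeZero n] [NeZero g] {R : Type} [Ring R]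
    {e : Bool → Fin n → Fin g → R} {w : Fin n → R} (h : GoodFam n g e w) :
    GoodFam n g (fun s => e (!s)) (fun i => - w i) where
  anti s t := h.anti _ _
  same s := h.same _
  eqw i p := by
    change e true i p * e false i p = _
    rw [h.anti, h.eqw]
  ne i p q hpq := by
    change e true i p * e false i q = _
    rw [h.anti, h.ne _ _ _ hpq.symm, neg_zero]
  cross s t := h.cross _ _
  bb i j := by
    change (e true i 0 - e true 0 0) * (e false j 0 - e false 0 0) = 0
    have := h.bb j i
    have h2 : (e true i 0 - e true 0 0) * (e false j 0 - e false 0 0) =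
        -((e false j 0 - e false 0 0) * (e true i 0 - e true 0 0)) := by
      simp only [mul_sub, sub_mul]
      rw [h.anti true false i j, h.anti true false i 0, h.anti true false 0 j,
        h.anti true false 0 0]
      abel
    rw [h2, this, neg_zero]

/-- The value on generators. -/
def genVal {n g : ℕ} {R : Type} (e : Bool → Fin n → Fin g → R) (w : Fin n → R) :
    SurfGen n g → R
  | .a i p => e false i p
  | .b i p => e true i p
  | .w i => w i

theorem GoodFam.we {n g : ℕ} [NeZero n] [NeZero g] {R : Type} [Ring R]
    {e : Bool → Fin n → Fin g → R} {w : Fin n → R} (h : GoodFam n g e w) (i t j q) :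
    w i * e t j q = e t j q * w i := by
  rw [← h.eqw i 0, mul_assoc, h.anti true t, mul_neg, ← mul_assoc, h.anti false t, neg_mul,
    neg_neg, mul_assoc]

theorem GoodFam.ww {n g : ℕ} [NeZero n] [NeZero g] {R : Type} [Ring R]
    {e : Bool → Fin n → Fin g → R} {w : Fin n → R} (h : GoodFam n g e w) (i j) :
    w i * w j = w j * w i := by
  rw [← h.eqw j 0, ← mul_assoc, h.we, mul_assoc, h.we, mul_assoc]

theorem GoodFam.exists_hom {n g : ℕ} [NeZero n] [NeZero g] {R : Type} [Ring R] [Algebra ℚ R]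
    {e : Bool → Fin n → Fin g → R} {w : Fin n → R} (h : GoodFam n g e w) :
    ∃ F : SurfB n g →ₐ[ℚ] R,
      (∀ i, F (toB n g (toA n g (gW i))) = w i) ∧
      (∀ i, F (toB n g (toA n g (gX i 0))) = if i = 0 then e false i 0
        else e false i 0 - e false 0 0) ∧
      (∀ i, F (toB n g (toA n g (gY i 0))) = if i = 0 then e true i 0
        else e true i 0 - e true 0 0) := by
  let f0 : FreeAlgebra ℚ (SurfGen n g) →ₐ[ℚ] R := FreeAlgebra.lift ℚ (genVal e w)
  have hf0 : ∀ x, f0 (FreeAlgebra.ι ℚ x) = genVal e w x := fun x => by simp [f0]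
  have h0 : ∀ ⦃x y⦄, SurfRel n g x y → f0 x = f0 y := by
    intro x y r
    cases r with
    | aa i p q => simp [hf0, genVal, h.same]
    | bb i p q => simp [hf0, genVal, h.same]
    | ab_eq i p => simp [hf0, genVal, h.eqw]
    | ab_ne i p q hpq => simp [hf0, genVal, h.ne _ _ _ hpq]
    | koszul u v =>
      rw [map_mul, map_smul, map_mul, hf0, hf0]
      cases u <;> cases v <;> simp only [genVal, SurfGen.deg] <;> norm_num
      all_goals first
        | exact h.anti _ _ _ _ _ _
        | exact h.we _ _ _ _
        | exact (h.we _ _ _ _).symm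
        | exact h.ww _ _
  let f1 : SurfCoh n g →ₐ[ℚ] R := RingQuot.liftAlgHom ℚ ⟨f0, h0⟩
  have f1A : ∀ i p, f1 (gA i p) = e false i p := fun i p =>
    (RingQuot.liftAlgHom_mkAlgHom_apply ℚ f0 h0 _).trans (hf0 _)
  have f1B : ∀ i p, f1 (gB i p) = e true i p := fun i p =>
    (RingQuot.liftAlgHom_mkAlgHom_apply ℚ f0 h0 _).trans (hf0 _)
  have f1W : ∀ i, f1 (gW i) = w i := fun i =>
    (RingQuot.liftAlgHom_mkAlgHom_apply ℚ f0 h0 _).trans (hf0 _)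
  have h1 : ∀ ⦃x y⦄, ARel n g x y → f1 x = f1 y := by
    intro x y r
    cases r with
    | xx i j p q hij hp hq => simp [gX, hp, hq, f1A, h.cross _ _ i j p q hij hp hq]
    | xy i j p q hij hp hq => simp [gX, gY, hp, hq, f1A, f1B, h.cross _ _ i j p q hij hp hq]
    | yy i j p q hij hp hq => simp [gY, hp, hq, f1B, h.cross _ _ i j p q hij hp hq]
  let f2 : SurfA n g →ₐ[ℚ] R := RingQuot.liftAlgHom ℚ ⟨f1, h1⟩
  have hf2 : ∀ x, f2 (toA n g x) = f1 x := fun x =>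
    RingQuot.liftAlgHom_mkAlgHom_apply ℚ f1 h1 x
  have h2 : ∀ ⦃x y⦄, BRel n g x y → f2 x = f2 y := by
    intro x y r
    cases r with
    | mk i j hi hj => simp [xA, yA, hf2, gX, gY, hi, hj, f1A, f1B, h.bb]
  let f3 : SurfB n g →ₐ[ℚ] R := RingQuot.liftAlgHom ℚ ⟨f2, h2⟩
  have hf3 : ∀ x, f3 (toB n g x) = f2 x := fun x =>
    RingQuot.liftAlgHom_mkAlgHom_apply ℚ f2 h2 x
  refine ⟨f3, fun i => ?_, fun i => ?_, fun i => ?_⟩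
  · rw [hf3, hf2, f1W]
  · rw [hf3, hf2]
    by_cases hi : i = 0 <;> simp [gX, hi, f1A]
  · rw [hf3, hf2]
    by_cases hi : i = 0 <;> simp [gY, hi, f1B]

theorem GoodFam.exists_hom' {n g : ℕ} [NeZero n] [NeZero g] {R : Type} [Ring R] [Algebra ℚ R]
    {e : Bool → Fin n → Fin g → R} {w : Fin n → R} (h : GoodFam n g e w) :
    ∃ F : SurfB n g →ₐ[ℚ] R,
      F (elt1 n g) = (List.ofFn fun i : Fin n => if i = 0 then w i else
        e false i 0 - e false 0 0).prod ∧
      F (elt2 n g) = (List.ofFn fun i : Fin n => if i = 0 then w i else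
        e true i 0 - e true 0 0).prod := by
  obtain ⟨F, hW, hX, hY⟩ := h.exists_hom
  refine ⟨F, ?_, ?_⟩
  · rw [elt1, map_list_prod, map_list_prod, map_list_prod, List.map_ofFn, List.map_ofFn,
      List.map_ofFn]
    congr 2
    funext i
    by_cases hi : i = 0
    · simp [hi, hW]
    · simp [hi, hX]
  · rw [elt2, map_list_prod, map_list_prod, map_list_prod, List.map_ofFn, List.map_ofFn,
      List.map_ofFn]
    congr 2
    funext i
    by_cases hi : i = 0
    · simp [hi, hW]
    · simp [hi, hY]

/-- The exterior algebra on `n` generators. -/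
abbrev Lam (n : ℕ) : Type := ExteriorAlgebra ℚ (Fin n → ℚ)

/-- The generators of the exterior algebra. -/
noncomputable def al {n : ℕ} (j : Fin n) : Lam n := ExteriorAlgebra.ι ℚ (Pi.single j (1 : ℚ))

theorem al_sq {n : ℕ} (j : Fin n) : al j * al j = 0 := ExteriorAlgebra.ι_sq_zero _

theorem al_anti {n : ℕ} (j k : Fin n) : al j * al k = -(al k * al j) :=
  eq_neg_of_add_eq_zero_left (ExteriorAlgebra.ι_add_mul_swap _ _)

/-- The linear map killing the coordinate `j`. -/
def killLin {n : ℕ} (j : Fin n) : (Fin n → ℚ) →ₗ[ℚ] (Fin n → ℚ) where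
  toFun v := v - v j • Pi.single j 1
  map_add' u v := by simp only [Pi.add_apply, add_smul]; abel
  map_smul' c v := by simp [mul_smul, smul_sub]

/-- The endomorphism of the exterior algebra killing the generator `j`. -/
noncomputable def phi {n : ℕ} (j : Fin n) : Lam n →ₐ[ℚ] Lam n := ExteriorAlgebra.map (killLin j)

theorem phi_al {n : ℕ} (j k : Fin n) : phi j (al k) = if k = j then 0 else al k := by
  rw [phi, al, ExteriorAlgebra.map_apply_ι]
  split_ifs with h
  · subst h
    simp [killLin]
  · simp [killLin, Pi.single_apply, Ne.symm h]

theorem al_phi {n : ℕ} (j : Fin n) (u : Lam n) : al j * phi j u = al j * u := by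
  induction u using CliffordAlgebra.left_induction with
  | algebraMap r => rw [AlgHom.commutes]
  | add x y hx hy => rw [map_add, mul_add, mul_add, hx, hy]
  | ι_mul x m hx =>
    change al j * phi j (ExteriorAlgebra.ι ℚ m * x) = al j * (ExteriorAlgebra.ι ℚ m * x)
    have hsw : ∀ v : Fin n → ℚ, al j * ExteriorAlgebra.ι ℚ v = -(ExteriorAlgebra.ι ℚ v * al j) :=
      fun v => eq_neg_of_add_eq_zero_left (ExteriorAlgebra.ι_add_mul_swap _ _)
    have hk : al j * phi j (ExteriorAlgebra.ι ℚ m) = al j * ExteriorAlgebra.ι ℚ m := by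
      rw [phi, ExteriorAlgebra.map_apply_ι]
      simp only [killLin, LinearMap.coe_mk, AddHom.coe_mk, map_sub, map_smul]
      rw [mul_sub, mul_smul_comm, show ExteriorAlgebra.ι ℚ (Pi.single j (1 : ℚ)) = al j from rfl,
        al_sq, smul_zero, sub_zero]
    rw [map_mul, ← mul_assoc, hk, hsw, neg_mul, mul_assoc, hx, ← mul_assoc, ← neg_mul, ← hsw,
      mul_assoc]

/-- The representation space. -/
abbrev VV (n g : ℕ) : Type := Lam n × Lam n × (Bool → Fin n → Fin g → Lam n)

/-- `a_j(1)`. -/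
noncomputable def opA (n g : ℕ) (j : Fin n) : Module.End ℚ (VV n g) where
  toFun x := (al j * x.1, -(al j * x.2.1), fun s k q => if k = j then 0 else -(al j * x.2.2 s k q))
  map_add' x y := by
    ext1
    · simp [mul_add]
    ext1
    · simp [mul_add]; abel
    · funext s k q
      by_cases h : k = j <;> simp [h, mul_add]; abel
  map_smul' c x := by
    ext1
    · simp
    ext1
    · simp
    · funext s k q
      by_cases h : k = j <;> simp [h]

/-- `b_j(1)`. -/
noncomputable def opB (n g : ℕ) : Module.End ℚ (VV n g) where
  toFun x := (0, x.1, 0)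
  map_add' x y := by simp
  map_smul' c x := by simp

/-- The sign of `a`, `b`. -/
def sg : Bool → ℚ
  | false => -1
  | true => 1

/-- `a_j(p)` and `b_j(p)` for `p ≥ 2`. -/
noncomputable def opM (n g : ℕ) (s : Bool) (j : Fin n) (p : Fin g) : Module.End ℚ (VV n g) where
  toFun x := (0, sg s • (al j * x.2.2 (!s) j p),
    fun t k q => if t = s ∧ k = j ∧ q = p then phi j x.1 else 0)
  map_add' x y := by
    ext1
    · simp
    ext1
    · simp [mul_add]
    · funext t k q
      by_cases h : t = s ∧ k = j ∧ q = p <;> simp [h]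
  map_smul' c x := by
    ext1
    · simp
    ext1
    · simp [smul_comm c]
    · funext t k q
      by_cases h : t = s ∧ k = j ∧ q = p <;> simp [h]

/-- `ω_j`. -/
noncomputable def opW (n g : ℕ) (j : Fin n) : Module.End ℚ (VV n g) where
  toFun x := (0, -(al j * x.1), 0)
  map_add' x y := by simp [mul_add]; abel
  map_smul' c x := by simp

/-- The whole family. -/
noncomputable def opE (n g : ℕ) [NeZero g] (s : Bool) (j : Fin n) (p : Fin g) :
    Module.End ℚ (VV n g) :=
  if p = 0 then (if s then opB n g else opA n g j) else opM n g s j p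

theorem AA (n g : ℕ) (i j : Fin n) : opA n g i * opA n g j = -(opA n g j * opA n g i) := by
  refine LinearMap.ext fun x => ?_
  simp only [opA, Module.End.mul_apply, LinearMap.neg_apply, LinearMap.coe_mk, AddHom.coe_mk]
  refine Prod.ext ?_ (Prod.ext ?_ ?_)
  · simp only [Prod.fst_neg, ← mul_assoc]
    rw [al_anti, neg_mul]
  · simp only [Prod.fst_neg, Prod.snd_neg, mul_neg, neg_neg, ← mul_assoc]
    rw [al_anti, neg_mul]
  · funext s k q
    simp only [Prod.snd_neg, Pi.neg_apply]
    split_ifs <;> simp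
    rw [← mul_assoc, ← mul_assoc, al_anti, neg_mul]

theorem AA0 (n g : ℕ) (i : Fin n) : opA n g i * opA n g i = 0 := by
  have h := AA n g i i
  have h2 : (2 : ℚ) • (opA n g i * opA n g i) = 0 := by
    rw [two_smul]
    exact eq_neg_iff_add_eq_zero.mp h
  exact (smul_eq_zero.mp h2).resolve_left two_ne_zero

theorem BB0 (n g : ℕ) : opB n g * opB n g = 0 := by
  refine LinearMap.ext fun x => ?_
  simp [opB]

theorem AB (n g : ℕ) (i : Fin n) : opA n g i * opB n g = opW n g i := by
  refine LinearMap.ext fun x => ?_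
  refine Prod.ext ?_ (Prod.ext ?_ ?_)
  · simp [opA, opB, opW]
  · simp [opA, opB, opW]
  · funext s k q
    simp [opA, opB, opW]

theorem BA (n g : ℕ) (i : Fin n) : opB n g * opA n g i = -opW n g i := by
  refine LinearMap.ext fun x => ?_
  refine Prod.ext ?_ (Prod.ext ?_ ?_)
  · simp [opA, opB, opW]
  · simp [opA, opB, opW]
  · funext s k q
    simp [opA, opB, opW]

theorem BM (n g : ℕ) (s j p) : opB n g * opM n g s j p = 0 := by
  refine LinearMap.ext fun x => ?_
  simp [opB, opM]

theorem MB (n g : ℕ) (s j p) : opM n g s j p * opB n g = 0 := by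
  refine LinearMap.ext fun x => ?_
  refine Prod.ext ?_ (Prod.ext ?_ ?_)
  · simp [opM, opB]
  · simp [opM, opB]
  · funext s k q
    simp [opM, opB]

theorem AM (n g : ℕ) (i s j p) : opA n g i * opM n g s j p = -(opM n g s j p * opA n g i) := by
  refine LinearMap.ext fun x => ?_
  simp only [opA, opM, Module.End.mul_apply, LinearMap.neg_apply, LinearMap.coe_mk, AddHom.coe_mk]
  refine Prod.ext ?_ (Prod.ext ?_ ?_)
  · simp
  · simp only [Prod.snd_neg, Prod.fst_neg, mul_smul_comm]
    by_cases h : j = i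
    · subst h
      simp [← mul_assoc, al_sq]
    · simp [h, ← mul_assoc]
      rw [al_anti i j]
      simp
  · funext t k q
    simp only [Prod.snd_neg, Pi.neg_apply, map_mul, phi_al]
    by_cases h : t = s ∧ k = j ∧ q = p
    · obtain ⟨rfl, rfl, rfl⟩ := h
      by_cases hk : k = i
      · simp [hk]
      · simp [hk, Ne.symm hk]
    · simp [h]

theorem AM0 (n g : ℕ) (i s p) : opA n g i * opM n g s i p = 0 := by
  refine LinearMap.ext fun x => ?_
  simp only [opA, opM, Module.End.mul_apply, LinearMap.coe_mk, AddHom.coe_mk]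
  refine Prod.ext ?_ (Prod.ext ?_ ?_)
  · simp
  · simp [← mul_assoc, al_sq]
  · funext t k q
    by_cases h : k = i <;> simp [h]

theorem MM (n g : ℕ) (s i p t j q) : opM n g s i p * opM n g t j q =
    if t = !s ∧ i = j ∧ p = q then - sg s • opW n g i else 0 := by
  refine LinearMap.ext fun x => ?_
  by_cases h : t = !s ∧ i = j ∧ p = q
  · obtain ⟨rfl, rfl, rfl⟩ := h
    refine Prod.ext ?_ (Prod.ext ?_ ?_)
    · simp [opM, opW]
    · simp [opM, opW, al_phi]
    · funext t k q
      simp [opM, opW]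
  · have h' : ¬ ((!s) = t ∧ i = j ∧ p = q) := fun ⟨a, b⟩ => h ⟨a.symm, b⟩
    rw [if_neg h]
    refine Prod.ext ?_ (Prod.ext ?_ ?_)
    · simp [opM]
    · simp only [opM, Module.End.mul_apply, LinearMap.coe_mk, AddHom.coe_mk, if_neg h']
      simp
    · funext t k q
      simp [opM]

theorem good (n g : ℕ) [NeZero n] [NeZero g] : GoodFam n g (opE n g) (opW n g) where
  anti s t i j p q := by
    by_cases hp : p = 0 <;> by_cases hq : q = 0
    · cases s <;> cases t <;> simp [opE, hp, hq, BB0, AB, BA]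
      exact AA n g i j
    · cases s <;> simp [opE, hp, hq, BM, MB]
      exact AM _ _ _ _ _ _
    · cases t <;> simp [opE, hp, hq, BM, MB]
      rw [AM, neg_neg]
    · simp only [opE, hp, hq, if_false, MM]
      by_cases h : t = !s ∧ i = j ∧ p = q
      · obtain ⟨rfl, rfl, rfl⟩ := h
        cases s
        · simp only [sg, Bool.not_false, Bool.not_true, and_self, if_true]
          refine LinearMap.ext fun x => ?_
          simp only [LinearMap.smul_apply, LinearMap.neg_apply]
          module
        · simp only [sg, Bool.not_false, Bool.not_true, and_self, if_true]
          refine LinearMap.ext fun x => ?_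
          simp only [LinearMap.smul_apply, LinearMap.neg_apply]
          module
      · rw [if_neg h, if_neg, neg_zero]
        rintro ⟨rfl, rfl, rfl⟩
        simp at h
  same s i p q := by
    by_cases hp : p = 0 <;> by_cases hq : q = 0
    · cases s <;> simp [opE, hp, hq, BB0, AA0]
    · cases s <;> simp [opE, hp, hq, BM, AM0]
    · cases s
      · have := AM n g i false i p
        rw [AM0] at this
        simpa [opE, hp, hq] using this.symm
      · simp [opE, hp, hq, MB]
    · simp [opE, hp, hq, MM]
  eqw i p := by
    by_cases hp : p = 0
    · simp [opE, hp, AB]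
    · simp [opE, hp, MM, sg]
  ne i p q hpq := by
    by_cases hp : p = 0 <;> by_cases hq : q = 0
    · exact absurd (hp.trans hq.symm) hpq
    · simp [opE, hp, hq, AM0]
    · simp [opE, hp, hq, MB]
    · simp [opE, hp, hq, MM, hpq]
  cross s t i j p q hij hp hq := by simp [opE, hp, hq, MM, hij]
  bb i j := by simp [opE]

theorem ofFn_prod_apply (n g m : ℕ) (c : Fin m → Module.End ℚ (VV n g)) (v : Fin m → Lam n)
    (hc : ∀ i u, c i (u, 0, 0) = (v i * u, 0, 0)) :
    (List.ofFn c).prod (1, 0, 0) = ((List.ofFn v).prod, 0, 0) := by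
  induction m with
  | zero => simp
  | succ m ih =>
    rw [List.ofFn_succ, List.prod_cons, List.ofFn_succ, List.prod_cons, Module.End.mul_apply,
      ih (fun i => c i.succ) (fun i => v i.succ) (fun i u => hc _ _), hc]

theorem top_ne (m : ℕ) : (al (0 : Fin (m+1)) *
    (List.ofFn fun i : Fin m => al i.succ - al (0 : Fin (m+1))).prod) ≠ 0 := by
  let v : Fin (m+1) → (Fin (m+1) → ℚ) :=
    Fin.cons (Pi.single 0 1) fun i : Fin m => Pi.single i.succ 1 - Pi.single 0 1
  have h : (al (0 : Fin (m+1)) *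
    (List.ofFn fun i : Fin m => al i.succ - al (0 : Fin (m+1))).prod)
      = ExteriorAlgebra.ιMulti ℚ (m+1) v := by
    rw [ExteriorAlgebra.ιMulti_apply, List.ofFn_succ, List.prod_cons]
    simp [v, al]
  rw [h]
  intro h0
  have h1 := congrArg (ExteriorAlgebra.liftAlternating (R := ℚ) (M := Fin (m+1) → ℚ) (N := ℚ)
    (fun k => if hk : k = m+1 then hk ▸ Matrix.detRowAlternating else 0)) h0
  rw [ExteriorAlgebra.liftAlternating_apply_ιMulti, map_zero] at h1
  simp only [dite_true] at h1
  have h2 : Matrix.det (Matrix.of v) = 0 := h1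
  rw [Matrix.det_of_isLowerTriangular] at h2
  · refine (Finset.prod_ne_zero_iff.mpr ?_) h2
    intro i _
    refine Fin.cases ?_ (fun i => ?_) i <;> simp [v]
  · intro i j hij
    have hij' : i < j := hij
    revert hij'
    refine Fin.cases ?_ (fun i => ?_) i
    · intro h; simp [v, h.ne']
    · intro h
      have : j ≠ 0 := (lt_of_le_of_lt (Fin.zero_le _) h).ne'
      simp [v, h.ne', this]

theorem exists_sep {n g : ℕ} [NeZero n] [NeZero g] (hn : 2 ≤ n) :
    (∃ F : SurfB n g →ₐ[ℚ] Module.End ℚ (VV n g), F (elt1 n g) ≠ 0 ∧ F (elt2 n g) = 0) ∧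
    (∃ F : SurfB n g →ₐ[ℚ] Module.End ℚ (VV n g), F (elt2 n g) ≠ 0 ∧ F (elt1 n g) = 0) := by
  obtain ⟨m, rfl⟩ : ∃ m, n = m + 2 := ⟨n - 2, by omega⟩
  have key : (opW (m+2) g 0 * (List.ofFn fun i : Fin (m+1) =>
      opA (m+2) g i.succ - opA (m+2) g 0).prod) ≠ 0 := by
    intro h
    have h1 := congrArg (fun T => T ((1, 0, 0) : VV (m+2) g)) h
    simp only [Module.End.mul_apply] at h1
    rw [ofFn_prod_apply _ _ _ _ (fun i : Fin (m+1) => al i.succ - al 0)] at h1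
    · have h2 := congrArg (fun x => x.2.1) h1
      simp only [opW, LinearMap.coe_mk, AddHom.coe_mk, LinearMap.zero_apply] at h2
      exact top_ne (m+1) (neg_eq_zero.mp h2)
    · intro i u
      refine Prod.ext ?_ (Prod.ext ?_ ?_)
      · simp [opA, sub_mul]
      · simp [opA]
      · funext s k q
        simp [opA]
  obtain ⟨F, hF1, hF2⟩ := (good (m+2) g).exists_hom'
  obtain ⟨G, hG1, hG2⟩ := (good (m+2) g).swap.exists_hom'
  refine ⟨⟨F, ?_, ?_⟩, ⟨G, ?_, ?_⟩⟩
  · rw [hF1, List.ofFn_succ, List.prod_cons]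
    simpa [opE] using key
  · rw [hF2]
    apply List.prod_eq_zero
    rw [List.mem_ofFn]
    exact ⟨1, by simp [opE]⟩
  · rw [hG2, List.ofFn_succ, List.prod_cons]
    intro h0
    apply key
    have h1 : -(opW (m+2) g 0 * (List.ofFn fun i : Fin (m+1) =>
        opA (m+2) g i.succ - opA (m+2) g 0).prod) = 0 := by
      refine (neg_mul (opW (m+2) g 0) _).symm.trans ?_
      simp [opE] at h0
      rw [List.ofFn_succ, List.prod_cons]
      exact h0
    exact neg_eq_zero.mp h1
  · rw [hG1]
    apply List.prod_eq_zero
    rw [List.mem_ofFn]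
    exact ⟨1, by simp [opE]⟩

/-- In `B_g = A_g / J_g` (`g ≥ 2`, `n ≥ 2`), the images of
`ω_1 x_2 ⋯ x_n` and `ω_1 y_2 ⋯ y_n` are linearly independent over `ℚ`. -/
theorem stmt12 (n g : ℕ) [NeZero n] [NeZero g] (hn : 2 ≤ n) (hg : 2 ≤ g) :
    LinearIndependent ℚ ![elt1 n g, elt2 n g] := by
  obtain ⟨⟨F, hF1, hF2⟩, ⟨G, hG2, hG1⟩⟩ := exists_sep (n := n) (g := g) hn
  rw [LinearIndependent.pair_iff]
  intro s t h
  constructor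
  · have := congrArg F h
    simpa [hF2, hF1] using this
  · have := congrArg G h
    simpa [hG2, hG1] using this
end

section
/- For s ≥ 2, the s-th zero-divisor cup-length of H*(ℝP³; ℤ/2) equals 3(s−1); that is, there exist 3(s−1) elements in the kernel of the s-fold multiplication map H*(ℝP³; ℤ/2)^{⊗s} → H*(ℝP³; ℤ/2) whose product is nonzero, and no longer such nonzero product exists. -/
open scoped TensorProduct

/-- `H^*(ℝP³; ℤ/2) ≅ (ℤ/2)[t]/(t⁴)`. -/
noncomputable abbrev CohRP3 : Type :=
  Polynomial (ZMod 2) ⧸ Ideal.span {(Polynomial.X : Polynomial (ZMod 2)) ^ 4}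

/-- The iterated multiplication `μ_s : A^{⊗s} → A` for `A = H^*(ℝP³; ℤ/2)`. -/
noncomputable def muRP3 (s : ℕ) : (⨂[ZMod 2] _ : Fin s, CohRP3) →ₗ[ZMod 2] CohRP3 :=
  PiTensorProduct.lift (MultilinearMap.mkPiAlgebraFin (ZMod 2) s CohRP3)

namespace RP3Aux

section Generic

variable {A : Type} [CommRing A] [Algebra (ZMod 2) A]

noncomputable def mu (A : Type) [CommRing A] [Algebra (ZMod 2) A] (s : ℕ) :
    (⨂[ZMod 2] _ : Fin s, A) →ₗ[ZMod 2] A :=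
  PiTensorProduct.lift (MultilinearMap.mkPiAlgebraFin (ZMod 2) s A)

abbrev TT (A : Type) [CommRing A] [Algebra (ZMod 2) A] (n : ℕ) : Type := ⨂[ZMod 2] _ : Fin (n + 1), A

noncomputable def sg (n : ℕ) (i : Fin (n + 1)) : A →ₐ[ZMod 2] TT A n :=
  PiTensorProduct.singleAlgHom (R := ZMod 2) (A := fun _ : Fin (n + 1) => A) i

lemma sg_apply (n : ℕ) (i : Fin (n + 1)) (a : A) :
    sg n i a = PiTensorProduct.tprod (ZMod 2) (Pi.mulSingle i a) := rfl

noncomputable def yy (tt : A) (n : ℕ) (j : Fin n) : TT A n := sg n j.succ tt - sg n 0 tt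

lemma two_eq (A : Type) [CommRing A] [Algebra (ZMod 2) A] (n : ℕ) : (2 : TT A n) = 0 := by
  have h : (algebraMap (ZMod 2) (TT A n)) 2 = 0 := by
    rw [show (2 : ZMod 2) = 0 from rfl, map_zero]
  rwa [map_ofNat] at h

lemma yy_pow (tt : A) (tt_pow_four : tt ^ 4 = 0) (n : ℕ) (j : Fin n) : yy tt n j ^ 4 = 0 := by
  have h1 : sg n j.succ tt ^ 4 = 0 := by rw [← map_pow, tt_pow_four, map_zero]
  have h2 : sg n 0 tt ^ 4 = 0 := by rw [← map_pow, tt_pow_four, map_zero]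
  have h3 := two_eq A n
  unfold yy
  generalize sg n j.succ tt = a at *
  generalize sg n 0 tt = b at *
  linear_combination h1 + h2 + (-2 * a ^ 3 * b + 3 * a ^ 2 * b ^ 2 - 2 * a * b ^ 3) * h3

lemma tprod_eq (n : ℕ) (v : Fin (n + 1) → A) :
    PiTensorProduct.tprod (ZMod 2) v = ∏ i, sg n i (v i) := by
  simp only [sg_apply]
  rw [← PiTensorProduct.tprod_prod, Finset.univ_prod_mulSingle]

lemma mu_tprod (n : ℕ) (v : Fin (n + 1) → A) :
    mu A (n + 1) (PiTensorProduct.tprod (ZMod 2) v) = ∏ i, v i := by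
  unfold mu
  rw [PiTensorProduct.lift.tprod, MultilinearMap.mkPiAlgebraFin_apply, List.prod_ofFn]

lemma mu_sg (n : ℕ) (i : Fin (n + 1)) (a : A) : mu A (n + 1) (sg n i a) = a := by
  rw [sg_apply, mu_tprod, Finset.prod_pi_mulSingle']
  simp

lemma mu_yy (tt : A) (n : ℕ) (j : Fin n) : mu A (n + 1) (yy tt n j) = 0 := by
  unfold yy
  rw [map_sub, mu_sg, mu_sg, sub_self]

lemma mk_eq (tt : A) (hom_ext : ∀ {B : Type} [CommRing B] [Algebra (ZMod 2) B]
    (f g : A →ₐ[ZMod 2] B), f tt = g tt → f = g) (n : ℕ) (x : TT A n) :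
    Ideal.Quotient.mk (Ideal.span (Set.range (yy tt n))) x =
      Ideal.Quotient.mk (Ideal.span (Set.range (yy tt n))) (sg n 0 (mu A (n + 1) x)) := by
  set I := Ideal.span (Set.range (yy tt n)) with hI
  have key : ∀ i : Fin (n + 1), (Ideal.Quotient.mkₐ (ZMod 2) I).comp (sg n i) =
      (Ideal.Quotient.mkₐ (ZMod 2) I).comp (sg n 0) := by
    intro i
    refine Fin.cases rfl (fun j => ?_) i
    apply hom_ext
    change Ideal.Quotient.mk I (sg n j.succ tt) = Ideal.Quotient.mk I (sg n 0 tt)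
    rw [Ideal.Quotient.eq]
    exact Ideal.subset_span ⟨j, rfl⟩
  have lin : (Ideal.Quotient.mkₐ (ZMod 2) I).toLinearMap =
      ((Ideal.Quotient.mkₐ (ZMod 2) I).comp (sg n 0)).toLinearMap ∘ₗ mu A (n + 1) := by
    apply PiTensorProduct.ext
    ext v
    change Ideal.Quotient.mkₐ (ZMod 2) I (PiTensorProduct.tprod (ZMod 2) v) =
      ((Ideal.Quotient.mkₐ (ZMod 2) I).comp (sg n 0))
        (mu A (n + 1) (PiTensorProduct.tprod (ZMod 2) v))
    rw [mu_tprod, tprod_eq, map_prod, map_prod]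
    exact Finset.prod_congr rfl fun i _ => DFunLike.congr_fun (key i) (v i)
  exact DFunLike.congr_fun lin x

lemma ker_mem (tt : A) (hom_ext : ∀ {B : Type} [CommRing B] [Algebra (ZMod 2) B]
    (f g : A →ₐ[ZMod 2] B), f tt = g tt → f = g) (n : ℕ) (x : TT A n) (hx : mu A (n + 1) x = 0) :
    ∃ c : Fin n → TT A n, ∑ j, c j * yy tt n j = x := by
  rw [← Ideal.mem_span_range_iff_exists_fun, ← Ideal.Quotient.eq_zero_iff_mem, mk_eq tt hom_ext, hx,
    map_zero, map_zero]

lemma upper (tt : A) (tt_pow_four : tt ^ 4 = 0) (hom_ext : ∀ {B : Type} [CommRing B] [Algebra (ZMod 2) B]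
    (f g : A →ₐ[ZMod 2] B), f tt = g tt → f = g) (n t : ℕ) (z : Fin t → TT A n) (hz : ∀ k, mu A (n + 1) (z k) = 0)
    (ht : 3 * n < t) : ∏ k, z k = 0 := by
  choose c hc using fun k => ker_mem tt hom_ext n (z k) (hz k)
  simp_rw [← hc]
  rw [Finset.prod_univ_sum]
  apply Finset.sum_eq_zero
  intro p _
  rw [Finset.prod_mul_distrib]
  obtain ⟨j, hj⟩ := Fintype.exists_lt_card_fiber_of_mul_lt_card (n := 3) p
    (by simpa [mul_comm] using ht)
  have : ∏ k, yy tt n (p k) = 0 := by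
    rw [← Finset.prod_filter_mul_prod_filter_not Finset.univ (fun k => p k = j)]
    rw [Finset.prod_congr rfl (g := fun _ => yy tt n j)
      (fun k hk => by rw [(Finset.mem_filter.mp hk).2])]
    rw [Finset.prod_const, pow_eq_zero_of_le hj (yy_pow tt tt_pow_four n j), zero_mul]
  rw [this, mul_zero]

noncomputable def ph (eps : A →ₐ[ZMod 2] A) (n : ℕ) (i : Fin (n + 1)) : A →ₐ[ZMod 2] A :=
  if i = 0 then eps else AlgHom.id _ _

noncomputable def FF (eps : A →ₐ[ZMod 2] A) (n : ℕ) : TT A n →ₐ[ZMod 2] TT A n :=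
  PiTensorProduct.liftAlgHom
    ((PiTensorProduct.tprod (ZMod 2)).compLinearMap (fun i => (ph eps n i).toLinearMap))
    (by
      rw [MultilinearMap.compLinearMap_apply, PiTensorProduct.one_def]
      congr 1
      ext i
      simp)
    (by
      intro x y
      simp only [MultilinearMap.compLinearMap_apply]
      rw [PiTensorProduct.tprod_mul_tprod]
      congr 1
      ext i
      simp)

lemma FF_sg (eps : A →ₐ[ZMod 2] A) (n : ℕ) (i : Fin (n + 1)) (a : A) : FF eps n (sg n i a) = sg n i (ph eps n i a) := by
  change PiTensorProduct.lift ((PiTensorProduct.tprod (ZMod 2)).compLinearMap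
    (fun i => (ph eps n i).toLinearMap)) (PiTensorProduct.tprod (ZMod 2) (Pi.mulSingle i a)) = _
  rw [PiTensorProduct.lift.tprod, MultilinearMap.compLinearMap_apply, sg_apply]
  congr 1
  ext k
  by_cases h : k = i
  · subst h; simp
  · simp [h]

lemma FF_yy (tt : A) (eps : A →ₐ[ZMod 2] A) (eps_tt : eps tt = 0) (n : ℕ) (j : Fin n) : FF eps n (yy tt n j) = sg n j.succ tt := by
  unfold yy
  rw [map_sub, FF_sg, FF_sg]
  simp [ph, eps_tt]

lemma tprod_ne (n : ℕ) (v : Fin (n + 1) → A) (hv : ∀ i, v i ≠ 0) :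
    (PiTensorProduct.tprod (ZMod 2) v : TT A n) ≠ 0 := by
  have : ∀ i, ∃ f : Module.Dual (ZMod 2) A, f (v i) ≠ 0 := by
    intro i
    by_contra! h
    exact hv i ((Module.forall_dual_apply_eq_zero_iff (ZMod 2) (v i)).mp h)
  choose f hf using this
  intro h
  have h2 := PiTensorProduct.dualDistrib_apply f v
  rw [h, map_zero] at h2
  exact Finset.prod_ne_zero_iff.mpr (fun i _ => hf i) h2.symm

lemma lower (tt : A) (tt_pow_three : tt ^ 3 ≠ 0) (eps : A →ₐ[ZMod 2] A)
    (eps_tt : eps tt = 0) (n : ℕ) : ∏ j, yy tt n j ^ 3 ≠ 0 := by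
  intro h
  have h2 := congrArg (FF eps n) h
  rw [map_prod, map_zero] at h2
  simp only [map_pow, FF_yy tt eps eps_tt] at h2
  refine tprod_ne n (Fin.cons 1 (fun _ => tt ^ 3)) ?_ ?_
  · intro i
    refine Fin.cases ?_ (fun j => ?_) i
    · intro h1
      have h3 : (1 : A) = 0 := h1
      exact tt_pow_three (by rw [← one_mul (tt ^ 3), h3, zero_mul])
    · exact tt_pow_three
  · rw [tprod_eq, Fin.prod_univ_succ]
    simpa using h2

theorem main (tt : A) (tt_pow_four : tt ^ 4 = 0) (tt_pow_three : tt ^ 3 ≠ 0) (hom_ext : ∀ {B : Type} [CommRing B] [Algebra (ZMod 2) B]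
    (f g : A →ₐ[ZMod 2] B), f tt = g tt → f = g) 
    (eps : A →ₐ[ZMod 2] A) (eps_tt : eps tt = 0) (n : ℕ) :
    (∃ z : Fin (3 * n) → TT A n, (∀ k, mu A (n + 1) (z k) = 0) ∧ (∏ k, z k) ≠ 0) ∧
      ∀ t : ℕ,
        (∃ z : Fin t → TT A n,
          (∀ k, mu A (n + 1) (z k) = 0) ∧ (∏ k, z k) ≠ 0) → t ≤ 3 * n := by
  refine ⟨⟨fun k => yy tt n (finProdFinEquiv.symm k).2, fun k => mu_yy tt n _, ?_⟩, ?_⟩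
  · rw [Equiv.prod_comp finProdFinEquiv.symm (fun k => yy tt n k.2), Fintype.prod_prod_type]
    simpa [Finset.prod_pow] using lower tt tt_pow_three eps eps_tt n
  · rintro t ⟨z, hz, hne⟩
    by_contra! h
    exact hne (upper tt tt_pow_four hom_ext n t z hz h)

end Generic

noncomputable def tt : CohRP3 := Ideal.Quotient.mk _ Polynomial.X

lemma tt_pow_four : tt ^ 4 = 0 := by
  unfold tt
  rw [← map_pow, Ideal.Quotient.eq_zero_iff_mem]
  exact Ideal.subset_span rfl

lemma tt_pow_three : tt ^ 3 ≠ 0 := by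
  unfold tt
  rw [← map_pow, Ne, Ideal.Quotient.eq_zero_iff_mem, Ideal.mem_span_singleton]
  intro h
  have := Polynomial.natDegree_le_of_dvd h (pow_ne_zero _ Polynomial.X_ne_zero)
  simp at this

lemma hom_ext {B : Type} [CommRing B] [Algebra (ZMod 2) B] (f g : CohRP3 →ₐ[ZMod 2] B)
    (h : f tt = g tt) : f = g := by
  apply Ideal.Quotient.algHom_ext
  apply Polynomial.algHom_ext
  exact h

noncomputable def eps : CohRP3 →ₐ[ZMod 2] CohRP3 :=
  Ideal.Quotient.liftₐ _ (Polynomial.aeval (0 : CohRP3)) (by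
    intro a ha
    rw [Ideal.mem_span_singleton] at ha
    obtain ⟨b, rfl⟩ := ha
    simp)

lemma eps_tt : eps tt = 0 := by
  change Polynomial.aeval (0 : CohRP3) Polynomial.X = 0
  simp

end RP3Aux

/-- For `s ≥ 2`, the `s`-th zero-divisor cup-length of `H^*(ℝP³; ℤ/2)`
equals `3(s-1)`: there exist `3(s-1)` elements of the kernel of the `s`-fold multiplication
map `H^*(ℝP³; ℤ/2)^{⊗s} → H^*(ℝP³; ℤ/2)` with nonzero product, and no larger such family
exists.  (Note that over `ℤ/2` the Koszul-signed multiplication on the tensor power agrees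
with the ordinary one.) -/
theorem stmt18 (s : ℕ) (hs : 2 ≤ s) :
    (∃ z : Fin (3 * (s - 1)) → ⨂[ZMod 2] _ : Fin s, CohRP3,
        (∀ k, muRP3 s (z k) = 0) ∧ (∏ k, z k) ≠ 0) ∧
      ∀ t : ℕ,
        (∃ z : Fin t → ⨂[ZMod 2] _ : Fin s, CohRP3,
          (∀ k, muRP3 s (z k) = 0) ∧ (∏ k, z k) ≠ 0) → t ≤ 3 * (s - 1) := by
  obtain ⟨n, rfl⟩ : ∃ n, s = n + 1 := ⟨s - 1, by omega⟩
  rw [Nat.add_sub_cancel]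
  exact RP3Aux.main RP3Aux.tt RP3Aux.tt_pow_four RP3Aux.tt_pow_three RP3Aux.hom_ext
    RP3Aux.eps RP3Aux.eps_tt n
end
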